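/- arXiv:1610.07668 — 3 statements merged into one kernel-verified Lean document; each statement's English description precedes it below -/
import Mathlib

section
/- There are infinitely many pairwise non-isomorphic cubic number fields whose ideal class group contains a subgroup isomorphic to (ℤ/2ℤ)^8. Precisely: the set of intermediate fields K of the extension ℚ̄/ℚ (where ℚ̄ is a fixed algebraic closure of ℚ) such that [K : ℚ] = 3 and there exists an injective group homomorphism from (ℤ/2ℤ)^8 into the ideal class group of the ring of integers of K, is an infinite set. -/
open NumberField

/-- coprime factors of a square generate square ideals -/
lemma span_eq_sq {O : Type*} [CommRing O] [IsDedekindDomain O] (α γ y : O)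
    (hc : IsCoprime α γ) (h : α * γ = y ^ 2) :
    ∃ I : Ideal O, Ideal.span {α} = I ^ 2 := by
  have hcop : IsCoprime (Ideal.span {α}) (Ideal.span {γ}) :=
    (Ideal.isCoprime_span_singleton_iff _ _).2 hc
  exact exists_eq_pow_of_mul_eq_pow_of_coprime (c := Ideal.span {y}) (n := 2) hcop
    (by rw [Ideal.span_singleton_mul_span_singleton, h, Ideal.span_singleton_pow])

lemma alpha_sq {O : Type*} [CommRing O] [IsDedekindDomain O] (θ : O) (A B a b y : ℤ)
    (hθ : θ ^ 3 + A * θ + B = 0)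
    (h : a ^ 3 + A * a * b ^ 2 + B * b ^ 3 = y ^ 2)
    (hc : IsCoprime y (3 * a ^ 2 + A * b ^ 2)) :
    ∃ I : Ideal O, Ideal.span {(a : O) - b * θ} = I ^ 2 := by
  have h' : (a : O) ^ 3 + A * a * b ^ 2 + B * b ^ 3 = y ^ 2 := by exact_mod_cast congrArg (Int.cast : ℤ → O) h
  have hprod : ((a : O) - b * θ) * (a ^ 2 + a * (b * θ) + (b * θ) ^ 2 + A * b ^ 2) = y ^ 2 := by
    linear_combination h' - b ^ 3 * hθ
  refine span_eq_sq _ _ (y : O) ?_ hprod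
  obtain ⟨u, v, huv⟩ := (hc.pow_left (m := 2))
  have huv' : (u : O) * y ^ 2 + v * (3 * a ^ 2 + A * b ^ 2) = 1 := by
    exact_mod_cast congrArg (Int.cast : ℤ → O) huv
  refine ⟨u * (a ^ 2 + a * (b * θ) + (b * θ) ^ 2 + A * b ^ 2) + v * (2 * a + b * θ), v, ?_⟩
  linear_combination huv' + u * hprod

section
variable {K : Type*} [Field K] [NumberField K]

lemma exists_fund (σ : K →+* ℝ) (h3 : Module.finrank ℚ K = 3)
    (hr : InfinitePlace.nrRealPlaces K ≤ 1) :
    ∃ u : (𝓞 K)ˣ, ∀ ε : (𝓞 K)ˣ, 0 < σ (ε : 𝓞 K) → ∃ n : ℤ, ε = u ^ n := by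
  have hodd : Odd (Module.finrank ℚ K) := by rw [h3]; decide
  have hrank : Units.rank K = 1 := by
    have h1 := InfinitePlace.card_add_two_mul_card_eq_rank K
    have h2 := InfinitePlace.card_eq_nrRealPlaces_add_nrComplexPlaces K
    unfold Units.rank
    omega
  set u0 := Units.fundSystem K ⟨0, by omega⟩ with hu0
  have key : ∀ ε : (𝓞 K)ˣ, ∃ n : ℤ, ε = u0 ^ n ∨ ε = - u0 ^ n := by
    intro ε
    obtain ⟨⟨ζ, e⟩, he, -⟩ := Units.exist_unique_eq_mul_prod K ε
    have : ∏ i, Units.fundSystem K i ^ e i = u0 ^ e ⟨0, by omega⟩ := by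
      have : Unique (Fin (Units.rank K)) := by rw [hrank]; infer_instance
      rw [Fintype.prod_unique]
      have : (default : Fin (Units.rank K)) = ⟨0, by omega⟩ := Subsingleton.elim _ _
      rw [this]
    simp only at he
    rw [this] at he
    refine ⟨e ⟨0, by omega⟩, ?_⟩
    rcases Units.torsion_eq_one_or_neg_one_of_odd_finrank hodd ζ with h | h
    · left; rw [he, h]; simp
    · right; rw [he, h]; simp
  have hne : ∀ ε : (𝓞 K)ˣ, σ (ε : 𝓞 K) ≠ 0 := by
    intro ε; simp
  have fin : ∀ u1 : (𝓞 K)ˣ, 0 < σ (u1 : 𝓞 K) → (u1 = u0 ∨ u1 = -u0) →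
      ∃ u : (𝓞 K)ˣ, ∀ ε : (𝓞 K)ˣ, 0 < σ (ε : 𝓞 K) → ∃ n : ℤ, ε = u ^ n := by
    intro u1 h1 h2
    refine ⟨u1, fun ε hε => ?_⟩
    have hk : ∃ n : ℤ, ε = u1 ^ n ∨ ε = - u1 ^ n := by
      obtain ⟨n, hn⟩ := key ε
      refine ⟨n, ?_⟩
      rcases h2 with h2 | h2
      · rw [h2]; exact hn
      · rw [h2]
        rcases Int.even_or_odd n with hh | hh
        · rw [hh.neg_zpow]; exact hn
        · rw [hh.neg_zpow, neg_neg]; exact hn.symm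
    obtain ⟨n, hn | hn⟩ := hk
    · exact ⟨n, hn⟩
    · exfalso
      have hs : σ ((u1 ^ n : (𝓞 K)ˣ) : 𝓞 K) = (σ (u1 : 𝓞 K)) ^ n := by
        have := congrArg Units.val (map_zpow
          (Units.map ((σ.comp (algebraMap (𝓞 K) K)) : 𝓞 K →* ℝ)) u1 n)
        rw [Units.val_zpow_eq_zpow_val] at this
        exact this
      rw [hn] at hε
      have : σ ((-u1 ^ n : (𝓞 K)ˣ) : 𝓞 K) = - σ ((u1 ^ n : (𝓞 K)ˣ) : 𝓞 K) := by
        simp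
      rw [this, hs] at hε
      have := zpow_pos h1 n
      linarith
  rcases lt_or_gt_of_ne (hne u0) with h | h
  · refine fin (-u0) ?_ (Or.inr rfl)
    simpa using h
  · exact fin u0 h (Or.inl rfl)
end

/-- homomorphism from an elementary abelian 2-group given by elements of order dividing 2 -/
noncomputable def elemHom {G : Type*} [CommGroup G] {n : ℕ} (c : Fin n → G) (hc : ∀ i, c i ^ 2 = 1) :
    Multiplicative (Fin n → ZMod 2) →* G where
  toFun v := ∏ i, c i ^ (v.toAdd i).val
  map_one' := by simp
  map_mul' v w := by
    rw [← Finset.prod_mul_distrib]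
    refine Finset.prod_congr rfl fun i _ => ?_
    rw [← pow_add]
    simp only [toAdd_mul, Pi.add_apply, ZMod.val_add]
    exact (pow_eq_pow_mod _ (hc i)).symm


section
variable {K : Type*} [Field K] [NumberField K]

lemma exists_hom (σ : K →+* ℝ) (h3 : Module.finrank ℚ K = 3)
    (hr : InfinitePlace.nrRealPlaces K ≤ 1) (α : Fin 9 → 𝓞 K)
    (hpos : ∀ i, 0 < σ (α i)) (hsq : ∀ i, ∃ I : Ideal (𝓞 K), Ideal.span {α i} = I ^ 2)
    (hind : ∀ e : Fin 9 → ℕ, IsSquare (∏ i, α i ^ e i) → ∀ j, Even (e j)) :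
    ∃ f : Multiplicative (Fin 8 → ZMod 2) →* ClassGroup (𝓞 K), Function.Injective f := by
  obtain ⟨u, hu⟩ := exists_fund σ h3 hr
  choose I hI using hsq
  have hα0 : ∀ i, α i ≠ 0 := by
    intro i h
    have := hpos i
    rw [h] at this
    simp at this
  have hI0 : ∀ i, I i ∈ nonZeroDivisors (Ideal (𝓞 K)) := by
    intro i
    rw [mem_nonZeroDivisors_iff_ne_zero]
    intro h
    have := hI i
    rw [h] at this
    simp at this
    exact hα0 i this
  let c : Fin 9 → ClassGroup (𝓞 K) := fun i => ClassGroup.mk0 ⟨I i, hI0 i⟩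
  have hc : ∀ i, c i ^ 2 = 1 := by
    intro i
    change (ClassGroup.mk0 ⟨I i, hI0 i⟩) ^ 2 = 1
    rw [← map_pow]
    have : (⟨I i, hI0 i⟩ : nonZeroDivisors (Ideal (𝓞 K))) ^ 2
      = ⟨I i ^ 2, pow_mem (hI0 i) 2⟩ := rfl
    rw [this, ClassGroup.mk0_eq_one_iff, ← hI i]
    exact ⟨⟨α i, rfl⟩⟩
  -- kernel elements
  have hker : ∀ v : Multiplicative (Fin 9 → ZMod 2), elemHom c hc v = 1 →
      ∃ (n : ℤ) (g : 𝓞 K), ∏ i, α i ^ (v.toAdd i).val = ((u ^ n : (𝓞 K)ˣ) : 𝓞 K) * g ^ 2 := by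
    intro v hv
    have h1 : elemHom c hc v = ClassGroup.mk0
        (∏ i, (⟨I i, hI0 i⟩ : nonZeroDivisors (Ideal (𝓞 K))) ^ (v.toAdd i).val) := by
      rw [map_prod]
      simp only [map_pow]
      rfl
    rw [h1] at hv
    have h2 : (∏ i, I i ^ (v.toAdd i).val) ∈ nonZeroDivisors (Ideal (𝓞 K)) :=
      prod_mem fun i _ => pow_mem (hI0 i) _
    have h3 : (∏ i, (⟨I i, hI0 i⟩ : nonZeroDivisors (Ideal (𝓞 K))) ^ (v.toAdd i).val)
        = ⟨_, h2⟩ := by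
      ext1
      simp
    rw [h3, ClassGroup.mk0_eq_one_iff] at hv
    obtain ⟨g, hg⟩ := hv.principal
    have hg' : (∏ i, I i ^ (v.toAdd i).val) = Ideal.span {g} := hg
    have h4 : Ideal.span {∏ i, α i ^ (v.toAdd i).val} = Ideal.span {g ^ 2} := by
      rw [← Ideal.span_singleton_pow, ← hg', ← Finset.prod_pow, ← Ideal.prod_span_singleton]
      refine Finset.prod_congr rfl fun i _ => ?_
      rw [← Ideal.span_singleton_pow, hI i, ← pow_mul, ← pow_mul, mul_comm]
    rw [Ideal.span_singleton_eq_span_singleton] at h4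
    obtain ⟨w, hw⟩ := h4.symm
    have hτ : ∀ x : 𝓞 K, σ (x : K) = (σ.comp (algebraMap (𝓞 K) K)) x := fun _ => rfl
    have hpos' : 0 < σ ((∏ i, α i ^ (v.toAdd i).val : 𝓞 K) : K) := by
      rw [hτ, map_prod]
      refine Finset.prod_pos fun i _ => ?_
      rw [map_pow]
      exact pow_pos (hpos i) _
    have hw0 : 0 < σ (w : 𝓞 K) := by
      rw [← hw, hτ, map_mul, map_pow] at hpos'
      exact pos_of_mul_pos_right hpos' (sq_nonneg _)
    obtain ⟨n, hn⟩ := hu w hw0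
    exact ⟨n, g, by rw [← hw, hn, mul_comm]⟩
  have hsqn : ∀ n : ℤ, Even n → IsSquare ((u ^ n : (𝓞 K)ˣ) : 𝓞 K) := by
    rintro n ⟨k, rfl⟩
    exact ⟨((u ^ k : (𝓞 K)ˣ) : 𝓞 K), by rw [zpow_add, Units.val_mul]⟩
  have hev : ∀ x : ZMod 2, Even x.val → x = 0 := by decide
  have hev2 : ∀ x y : ZMod 2, Even (x.val + y.val) → x = y := by decide
  have huniq : ∀ v w : Multiplicative (Fin 9 → ZMod 2), elemHom c hc v = 1 → elemHom c hc w = 1 →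
      v ≠ 1 → w ≠ 1 → v = w := by
    intro v w hv hw hv1 hw1
    obtain ⟨n, g, hn⟩ := hker v hv
    obtain ⟨n', g', hn'⟩ := hker w hw
    have odd1 : ∀ (v : Multiplicative (Fin 9 → ZMod 2)) (n : ℤ) (g : 𝓞 K),
        ∏ i, α i ^ (v.toAdd i).val = ((u ^ n : (𝓞 K)ˣ) : 𝓞 K) * g ^ 2 → v ≠ 1 → Odd n := by
      intro v n g h hv
      by_contra hne
      rw [Int.not_odd_iff_even] at hne
      apply hv
      have := hind (fun i => (v.toAdd i).val) (by rw [h]; exact (hsqn n hne).mul ⟨g, sq g⟩)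
      apply Multiplicative.toAdd.injective
      funext j
      exact hev _ (this j)
    have h1 := odd1 v n g hn hv1
    have h2 := odd1 w n' g' hn' hw1
    have h3 := hind (fun i => (v.toAdd i).val + (w.toAdd i).val) (by
      have : ∏ i, α i ^ ((v.toAdd i).val + (w.toAdd i).val)
        = ((u ^ (n + n') : (𝓞 K)ˣ) : 𝓞 K) * (g * g') ^ 2 := by
        simp only [pow_add]
        rw [Finset.prod_mul_distrib, hn, hn', zpow_add, Units.val_mul]
        ring
      rw [this]
      exact (hsqn _ (h1.add_odd h2)).mul ⟨g * g', sq _⟩)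
    apply Multiplicative.toAdd.injective
    funext j
    exact hev2 _ _ (h3 j)
  have hres : ∃ j : Fin 9, ∀ v : Multiplicative (Fin 9 → ZMod 2), elemHom c hc v = 1 →
      v.toAdd j = 0 → v = 1 := by
    by_cases hex : ∃ k, elemHom c hc k = 1 ∧ k ≠ 1
    · obtain ⟨k, hk, hk1⟩ := hex
      have : ∃ j, k.toAdd j ≠ 0 := by
        by_contra hne
        push Not at hne
        apply hk1
        apply Multiplicative.toAdd.injective
        funext j
        exact hne j
      obtain ⟨j, hj⟩ := this
      refine ⟨j, fun v hv hvj => ?_⟩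
      by_contra hv1
      rw [huniq v k hv hk hv1 hk1] at hvj
      exact hj hvj
    · push Not at hex
      exact ⟨0, fun v hv _ => hex v hv⟩
  obtain ⟨j, hj⟩ := hres
  have hc' : ∀ i : Fin 8, c (j.succAbove i) ^ 2 = 1 := fun i => hc _
  refine ⟨elemHom (fun i => c (j.succAbove i)) hc', ?_⟩
  rw [injective_iff_map_eq_one]
  intro v hv
  have h1 := hj (Multiplicative.ofAdd (Fin.insertNth j (0 : ZMod 2) v.toAdd : Fin 9 → ZMod 2)) (by
    rw [← hv]
    simp only [elemHom, MonoidHom.coe_mk, OneHom.coe_mk, toAdd_ofAdd]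
    rw [Fin.prod_univ_succAbove _ j]
    simp) (by simp)
  apply Multiplicative.toAdd.injective
  funext i
  have h2 := congrFun (congrArg Multiplicative.toAdd h1) (j.succAbove i)
  simpa using h2
end

open Polynomial in
lemma hensel_root (q : ℕ) [Fact q.Prime] (A B ρ : ℤ) (h0 : (q : ℤ) ∣ ρ ^ 3 + A * ρ + B)
    (h1 : ¬ (q : ℤ) ∣ 3 * ρ ^ 2 + A) :
    ∃ z : ℤ_[q], z ^ 3 + A * z + B = 0 ∧ PadicInt.toZMod z = (ρ : ZMod q) := by
  set F : ℤ[X] := X ^ 3 + C A * X + C B with hF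
  have e0 : F.aeval (ρ : ℤ_[q]) = ((ρ ^ 3 + A * ρ + B : ℤ) : ℤ_[q]) := by
    simp [hF]
  have e1 : F.derivative.aeval (ρ : ℤ_[q]) = ((3 * ρ ^ 2 + A : ℤ) : ℤ_[q]) := by
    simp [hF]
    left
    exact map_ofNat _ 3
  have n0 : ‖F.aeval (ρ : ℤ_[q])‖ < 1 := by
    rw [e0]; exact (PadicInt.norm_int_lt_one_iff_dvd _).2 h0
  have n1 : ‖F.derivative.aeval (ρ : ℤ_[q])‖ = 1 := by
    rw [e1]
    refine le_antisymm (PadicInt.norm_le_one _) ?_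
    by_contra h
    exact h1 ((PadicInt.norm_int_lt_one_iff_dvd _).1 (not_le.1 h))
  obtain ⟨z, hz, hz1, -⟩ := hensels_lemma (F := F) (a := (ρ : ℤ_[q])) (by rw [n1]; simpa using n0)
  refine ⟨z, by simpa [hF] using hz, ?_⟩
  rw [n1] at hz1
  have : z - ρ ∈ RingHom.ker (PadicInt.toZMod (p := q)) := by
    rw [PadicInt.ker_toZMod, IsLocalRing.mem_maximalIdeal, PadicInt.mem_nonunits]
    exact hz1
  rw [RingHom.mem_ker, map_sub, map_intCast, sub_eq_zero] at this
  exact this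

/-- monotonicity: unique real root -/
lemma real_root_unique (A B : ℤ) (hA : 0 < A) (x y : ℝ) (hx : x ^ 3 + A * x + B = 0)
    (hy : y ^ 3 + A * y + B = 0) : x = y := by
  have hA' : (0 : ℝ) < A := by exact_mod_cast hA
  have : (x - y) * (x ^ 2 + x * y + y ^ 2 + A) = 0 := by linear_combination hx - hy
  rcases mul_eq_zero.1 this with h | h
  · linarith
  · nlinarith [sq_nonneg (x + y), sq_nonneg x, sq_nonneg y]

/-- independence criterion at one prime -/
lemma even_of_isSquare {K : Type*} [Field K] [NumberField K] (q : ℕ) [Fact q.Prime]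
    (φ : K →+* ℚ_[q]) (θ : 𝓞 K) (z : ℤ_[q]) (hz : φ θ = z) (ρ : ℤ)
    (hρ : PadicInt.toZMod z = (ρ : ZMod q)) (a b : Fin 9 → ℤ) (j : Fin 9)
    (hleg : ∀ i, legendreSym q (a i - b i * ρ) = if i = j then -1 else 1)
    (e : Fin 9 → ℕ) (hs : IsSquare (∏ i, ((a i : 𝓞 K) - b i * θ) ^ e i)) : Even (e j) := by
  obtain ⟨x, hx⟩ := hs
  set ψ : 𝓞 K →+* ℚ_[q] := φ.comp (algebraMap (𝓞 K) K) with hψ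
  have hθ : ψ θ = z := hz
  have h1 : PadicInt.Coe.ringHom (∏ i, ((a i : ℤ_[q]) - b i * z) ^ e i : ℤ_[q]) = ψ x * ψ x := by
    rw [← map_mul, ← hx, map_prod, map_prod]
    refine Finset.prod_congr rfl fun i _ => ?_
    simp only [map_pow, map_sub, map_mul, map_intCast, hθ]
    rfl
  have hn : ‖ψ x‖ ≤ 1 := by
    have h2 : ‖ψ x‖ * ‖ψ x‖ ≤ 1 := by
      rw [← norm_mul, ← h1]
      exact PadicInt.norm_le_one _
    nlinarith [norm_nonneg (ψ x)]
  set w : ℤ_[q] := ⟨ψ x, hn⟩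
  have h3 : (∏ i, ((a i : ℤ_[q]) - b i * z) ^ e i : ℤ_[q]) = w * w := by
    apply PadicInt.ext
    exact h1
  have h4 := congrArg (PadicInt.toZMod (p := q)) h3
  rw [map_prod, map_mul] at h4
  simp only [map_pow, map_sub, map_mul, map_intCast, hρ] at h4
  have h5 := congrArg (quadraticChar (ZMod q)) h4
  rw [map_prod, map_mul] at h5
  have h6 : ∀ i, quadraticChar (ZMod q) (((a i : ZMod q) - b i * ρ) ^ e i)
      = if i = j then (-1) ^ e j else 1 := by
    intro i
    have := hleg i
    unfold legendreSym at this
    push_cast at this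
    rw [map_pow, this]
    split_ifs with h
    · rw [h]
    · simp
  simp only [h6, Finset.prod_ite_eq', Finset.mem_univ, if_true] at h5
  by_contra hodd
  rw [Nat.not_even_iff_odd] at hodd
  rw [hodd.neg_one_pow] at h5
  nlinarith [mul_self_nonneg (quadraticChar (ZMod q) (PadicInt.toZMod w))]

open Polynomial in
lemma single_pb {K : Type*} [Field K] [NumberField K] (A B : ℤ) (hA : 0 < A)
    (a b y : Fin 9 → ℤ)
    (hE : ∀ i, a i ^ 3 + A * a i * b i ^ 2 + B * b i ^ 3 = y i ^ 2)
    (hy : ∀ i, y i ≠ 0) (hb : ∀ i, b i ≠ 0)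
    (hc : ∀ i, IsCoprime (y i) (3 * a i ^ 2 + A * b i ^ 2))
    (hq : ∀ j : Fin 9, ∃ (q : ℕ) (_ : Fact q.Prime) (ρ : ℤ), (q : ℤ) ∣ ρ ^ 3 + A * ρ + B ∧
      ¬ (q : ℤ) ∣ 3 * ρ ^ 2 + A ∧
      ∀ i, legendreSym q (a i - b i * ρ) = if i = j then -1 else 1)
    (pb : PowerBasis ℚ K)
    (hmin : minpoly ℚ pb.gen = X ^ 3 + C (A : ℚ) * X + C (B : ℚ))
    (h3 : Module.finrank ℚ K = 3) :
    ∃ f : Multiplicative (Fin 8 → ZMod 2) →* ClassGroup (𝓞 K), Function.Injective f := by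
  have hroot : pb.gen ^ 3 + A * pb.gen + B = 0 := by
    have := minpoly.aeval ℚ pb.gen
    rw [hmin] at this
    simpa using this
  have hIntg : IsIntegral ℤ pb.gen := by
    refine ⟨X ^ 3 + C A * X + C B, by monicity!, ?_⟩
    simp only [eval₂_add, eval₂_mul, eval₂_pow, eval₂_X, eval₂_C]
    simpa using hroot
  set θ : 𝓞 K := ⟨pb.gen, hIntg⟩ with hθ
  have hθc : algebraMap (𝓞 K) K θ = pb.gen := rfl
  have hθ0 : θ ^ 3 + A * θ + B = 0 := by
    apply RingOfIntegers.coe_injective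
    simpa [hθc] using hroot
  have hr : InfinitePlace.nrRealPlaces K ≤ 1 := by
    classical
    rw [← InfinitePlace.card_real_embeddings, Fintype.card_le_one_iff_subsingleton]
    constructor
    rintro ⟨φ, hφ⟩ ⟨ψ, hψ⟩
    have hx : ∀ (φ : K →+* ℂ) (hφ : ComplexEmbedding.IsReal φ),
        (hφ.embedding pb.gen) ^ 3 + A * (hφ.embedding pb.gen) + B = 0 := by
      intro φ hφ
      have := congrArg hφ.embedding hroot
      simpa using this
    have hxy := real_root_unique A B hA _ _ (hx φ hφ) (hx ψ hψ)
    have h1 : φ pb.gen = ψ pb.gen := by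
      rw [← hφ.coe_embedding_apply, ← hψ.coe_embedding_apply, hxy]
    have h2 : φ.toRatAlgHom = ψ.toRatAlgHom := pb.algHom_ext h1
    have h3 : φ = ψ := by
      ext x
      exact DFunLike.congr_fun h2 x
    exact Subtype.ext h3
  have hodd : Odd (Module.finrank ℚ K) := by rw [h3]; decide
  have hpos := InfinitePlace.nrRealPlaces_pos_of_odd_finrank hodd
  classical
  obtain ⟨⟨w, hw⟩⟩ := Fintype.card_pos_iff.1 hpos
  set σ := InfinitePlace.embedding_of_isReal hw
  refine exists_hom σ h3 hr (fun i => (a i : 𝓞 K) - b i * θ) ?_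
    (fun i => alpha_sq θ A B _ _ _ hθ0 (hE i) (hc i)) ?_
  · intro i
    have hs := congrArg σ hroot
    simp only [map_add, map_mul, map_pow, map_intCast, map_zero] at hs
    have e : σ (((a i : 𝓞 K) - b i * θ : 𝓞 K) : K) = a i - b i * σ pb.gen := by
      rw [← hθc]
      simp
    rw [e]
    set x := σ pb.gen
    have hEi : (a i : ℝ) ^ 3 + A * a i * b i ^ 2 + B * b i ^ 3 = y i ^ 2 := by exact_mod_cast hE i
    have hyi : (0 : ℝ) < (y i : ℝ) ^ 2 := by
      have : (y i : ℝ) ≠ 0 := by exact_mod_cast hy i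
      positivity
    have hprod : ((a i : ℝ) - b i * x) * (a i ^ 2 + a i * (b i * x) + (b i * x) ^ 2 + A * b i ^ 2)
        = y i ^ 2 := by
      linear_combination hEi - b i ^ 3 * hs
    have hA' : (0 : ℝ) < A := by exact_mod_cast hA
    have hb' : (0 : ℝ) < (b i : ℝ) ^ 2 := by
      have : (b i : ℝ) ≠ 0 := by exact_mod_cast hb i
      positivity
    have hg : 0 < ((a i : ℝ) ^ 2 + a i * (b i * x) + (b i * x) ^ 2 + A * b i ^ 2) := by
      have := mul_pos hA' hb'
      nlinarith [sq_nonneg ((a i : ℝ) + b i * x), sq_nonneg (a i : ℝ), sq_nonneg ((b i : ℝ) * x)]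
    rw [← hprod] at hyi
    exact pos_of_mul_pos_left hyi hg.le
  · intro e he j
    obtain ⟨q, hqp, ρ, h0, h1, hleg⟩ := hq j
    obtain ⟨z, hz, hzρ⟩ := hensel_root q A B ρ h0 h1
    have hl : aeval (z : ℚ_[q]) (minpoly ℚ pb.gen) = 0 := by
      rw [hmin]
      simp
      exact_mod_cast congrArg (PadicInt.Coe.ringHom) hz
    exact even_of_isSquare q (pb.lift (z : ℚ_[q]) hl).toRingHom θ z (pb.lift_gen _ hl) ρ hzρ a b j hleg e he

open Polynomial in
lemma cubic_irred (A B : ℤ) (h5 : ∀ x : ZMod 5, x ^ 3 + A * x + B ≠ 0) :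
    Irreducible (X ^ 3 + C (A : ℚ) * X + C (B : ℚ)) := by
  have hm : (X ^ 3 + C (A : ℚ) * X + C (B : ℚ)).Monic := by monicity!
  have hd : (X ^ 3 + C (A : ℚ) * X + C (B : ℚ)).natDegree = 3 := by compute_degree!
  rw [hm.irreducible_iff_roots_eq_zero_of_degree_le_three (by omega) (by omega),
    Multiset.eq_zero_iff_forall_notMem]
  intro r hr
  have hr' := isRoot_of_mem_roots hr
  have hm' : (X ^ 3 + C A * X + C B : ℤ[X]).Monic := by monicity!
  have hz := exists_integer_of_is_root_of_monic hm' (r := r) (by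
    simpa using hr')
  obtain ⟨z, hz, -⟩ := hz
  simp at hz
  subst hz
  apply h5 z
  simp at hr'
  have : z ^ 3 + A * z + B = 0 := by exact_mod_cast hr'
  exact_mod_cast congrArg (Int.cast : ℤ → ZMod 5) this

open Polynomial IntermediateField in
theorem single (A B : ℤ) (hA : 0 < A)
    (a b y : Fin 9 → ℤ)
    (hE : ∀ i, a i ^ 3 + A * a i * b i ^ 2 + B * b i ^ 3 = y i ^ 2)
    (hy : ∀ i, y i ≠ 0) (hb : ∀ i, b i ≠ 0)
    (hc : ∀ i, IsCoprime (y i) (3 * a i ^ 2 + A * b i ^ 2))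
    (h5 : ∀ x : ZMod 5, x ^ 3 + A * x + B ≠ 0)
    (hq : ∀ j : Fin 9, ∃ (q : ℕ) (_ : Fact q.Prime) (ρ : ℤ), (q : ℤ) ∣ ρ ^ 3 + A * ρ + B ∧
      ¬ (q : ℤ) ∣ 3 * ρ ^ 2 + A ∧
      ∀ i, legendreSym q (a i - b i * ρ) = if i = j then -1 else 1)
    (t : AlgebraicClosure ℚ) (ht : t ^ 3 + A * t + B = 0) :
    Module.finrank ℚ ℚ⟮t⟯ = 3 ∧
      ∃ f : Multiplicative (Fin 8 → ZMod 2) →* ClassGroup (𝓞 ℚ⟮t⟯), Function.Injective f := by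
  have hm : (X ^ 3 + C (A : ℚ) * X + C (B : ℚ)).Monic := by monicity!
  have hd : (X ^ 3 + C (A : ℚ) * X + C (B : ℚ)).natDegree = 3 := by compute_degree!
  have hmin : minpoly ℚ t = X ^ 3 + C (A : ℚ) * X + C (B : ℚ) :=
    (minpoly.eq_of_irreducible_of_monic (cubic_irred A B h5) (by simpa using ht) hm).symm
  have hIntg : IsIntegral ℚ t := ⟨_, hm, by
    simp only [eval₂_add, eval₂_mul, eval₂_pow, eval₂_X, eval₂_C]
    simpa using ht⟩
  have h3 : Module.finrank ℚ ℚ⟮t⟯ = 3 := by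
    rw [adjoin.finrank hIntg, hmin, hd]
  have : FiniteDimensional ℚ ℚ⟮t⟯ := adjoin.finiteDimensional hIntg
  have : NumberField ℚ⟮t⟯ := ⟨⟩
  refine ⟨h3, single_pb A B hA a b y hE hy hb hc hq (adjoin.powerBasis hIntg) ?_ h3⟩
  rw [adjoin.powerBasis_gen]
  exact (IntermediateField.minpoly_gen ℚ t).trans hmin

open Polynomial IntermediateField in
lemma disc_sq (A B A' B' : ℤ) (h5 : ∀ x : ZMod 5, x ^ 3 + A * x + B ≠ 0)
    (h5' : ∀ x : ZMod 5, x ^ 3 + A' * x + B' ≠ 0)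
    (t t' : AlgebraicClosure ℚ) (ht : t ^ 3 + A * t + B = 0) (ht' : t' ^ 3 + A' * t' + B' = 0)
    (hK : ℚ⟮t⟯ = ℚ⟮t'⟯) :
    ∃ s : ℚ, (4 * A' ^ 3 + 27 * B' ^ 2 : ℚ) = s ^ 2 * (4 * A ^ 3 + 27 * B ^ 2) := by
  have hmin : ∀ (A B : ℤ) (t : AlgebraicClosure ℚ), (∀ x : ZMod 5, x ^ 3 + A * x + B ≠ 0) →
      t ^ 3 + A * t + B = 0 → IsIntegral ℚ t ∧ (minpoly ℚ t).natDegree = 3 := by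
    intro A B t h5 ht
    have hm : (X ^ 3 + C (A : ℚ) * X + C (B : ℚ)).Monic := by monicity!
    have hd : (X ^ 3 + C (A : ℚ) * X + C (B : ℚ)).natDegree = 3 := by compute_degree!
    refine ⟨⟨_, hm, ?_⟩, ?_⟩
    · simp only [eval₂_add, eval₂_mul, eval₂_pow, eval₂_X, eval₂_C]
      simpa using ht
    · rw [← minpoly.eq_of_irreducible_of_monic (cubic_irred A B h5) (by simpa using ht) hm, hd]
  obtain ⟨hi, hd⟩ := hmin A B t h5 ht
  obtain ⟨hi', hd'⟩ := hmin A' B' t' h5' ht'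
  have hmem : t' ∈ ℚ⟮t⟯ := by rw [hK]; exact mem_adjoin_simple_self ℚ t'
  obtain ⟨g, hg, hgt⟩ := (adjoin.powerBasis hi).exists_eq_aeval ⟨t', hmem⟩
  have hg3 : g.natDegree < 3 := by
    have : (adjoin.powerBasis hi).dim = 3 := by rw [adjoin.powerBasis_dim, hd]
    omega
  obtain ⟨u, v, w, huvw⟩ : ∃ u v w : ℚ, t' = u + v * t + w * t ^ 2 := by
    refine ⟨g.coeff 0, g.coeff 1, g.coeff 2, ?_⟩
    have h1 := congrArg (algebraMap ℚ⟮t⟯ (AlgebraicClosure ℚ)) hgt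
    rw [aeval_eq_sum_range' hg3] at h1
    rw [adjoin.powerBasis_gen] at h1
    simp [Finset.sum_range_succ, Algebra.smul_def] at h1
    linear_combination h1
  have hnz : ∀ c0 c1 c2 : ℚ, (c2 : AlgebraicClosure ℚ) * t' ^ 2 + c1 * t' + c0 = 0 →
      c2 = 0 ∧ c1 = 0 ∧ c0 = 0 := by
    intro c0 c1 c2 h
    have hp : (C c2 * X ^ 2 + C c1 * X + C c0 : ℚ[X]) = 0 := by
      by_contra hne
      have h1 := natDegree_le_natDegree (minpoly.degree_le_of_ne_zero ℚ t' hne (by simpa using h))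
      have h2 : (C c2 * X ^ 2 + C c1 * X + C c0 : ℚ[X]).natDegree ≤ 2 := by compute_degree
      omega
    refine ⟨?_, ?_, ?_⟩
    · simpa using congrArg (fun p => coeff p 2) hp
    · simpa [coeff_X, coeff_C] using congrArg (fun p => coeff p 1) hp
    · simpa using congrArg (fun p => coeff p 0) hp
  set S : ℚ := A * v ^ 2 + 3 * B * v * w + A ^ 2 * w ^ 2 with hS
  set P : ℚ := B * (v ^ 3 + A * v * w ^ 2 - B * w ^ 3) with hP
  have hcp : (t' - u) ^ 3 + 2 * A * w * (t' - u) ^ 2 + S * (t' - u) + P = 0 := by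
    rw [huvw, hS, hP]
    push_cast
    have h3 : t ^ 3 = - (A * t) - B := by linear_combination ht
    have h4 : t ^ 4 = - (A * t ^ 2) - B * t := by linear_combination t * ht
    have h5 : t ^ 5 = A ^ 2 * t + A * B - B * t ^ 2 := by linear_combination t ^ 2 * ht - A * ht
    have h6 : t ^ 6 = (A * t + B) ^ 2 := by
      linear_combination (t ^ 3 - A * t - B) * ht
    ring_nf
    simp only [h3, h4, h5, h6]
    ring
  obtain ⟨k2, k1, k0⟩ := hnz (-u ^ 3 + 2 * A * w * u ^ 2 - S * u + P - B')
    (3 * u ^ 2 - 4 * A * w * u + S - A') (2 * A * w - 3 * u) (by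
      push_cast
      linear_combination hcp - ht')
  refine ⟨v ^ 3 + A * v * w ^ 2 + B * w ^ 3, ?_⟩
  have eu : u = 2 * A * w / 3 := by linarith
  have eA : (A' : ℚ) = 3 * u ^ 2 - 4 * A * w * u + S := by linarith
  have eB : (B' : ℚ) = -u ^ 3 + 2 * A * w * u ^ 2 - S * u + P := by linarith
  rw [eA, eB, eu, hS, hP]
  ring

section family
variable {R : Type*} [CommRing R]

/-- coefficient of `X` in the cubic -/
def cA (m M : R) : R :=
  50220 * m ^ 7 * M - 14779193580 * m ^ 6 * M ^ 2 - 1271053193611140 * m ^ 5 * M ^ 3 +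
  118406064420466837848 * m ^ 4 * M ^ 4 + 5976208194852457391602500 * m ^ 3 * M ^ 5 -
  326719249428257506760172187500 * m ^ 2 * M ^ 6 - 5219906044396242332420705742187500 * m * M ^ 7

/-- constant coefficient of the cubic -/
def cB (m M : R) : R :=
  - 1458 * m ^ 11 * M + 4538783160 * m ^ 10 * M ^ 2 - 245332129059990 * m ^ 9 * M ^ 3 -
  63789133866032031840 * m ^ 8 * M ^ 4 + 5965446276029139983951580 * m ^ 7 * M ^ 5 +
  465573191262122574113242191696 * m ^ 6 * M ^ 6 - 28048195858327108195396413975817500 * m ^ 5 * M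
  ^ 7 - 1410167464522014027274594346411077500000 * m ^ 4 * M ^ 8 +
  25500013209176439956511908421650789121093750 * m ^ 3 * M ^ 9 +
  2218132090762223938833967269399348283388671875000 * m ^ 2 * M ^ 10 +
  3350174947641904950377760844221024455053527832031250 * m * M ^ 11

/-- the integers `d i` -/
def dF : Fin 9 → ℤ := ![-4, -3, -2, -1, 1, 2, 3, 5, -5]

/-- numerators of the `x`-coordinates of the points -/
def aF : Fin 9 → R → R → R := ![
  fun m M => m ^ 4 - 1437840 * m ^ 3 * M - 53539374498 * m ^ 2 * M ^ 2 + 6760402502490000 * m * M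
  ^ 3 + 22106703431396390625 * M ^ 4,
  fun m M => m ^ 4 - 409998 * m ^ 3 * M + 9858463758 * m ^ 2 * M ^ 2 + 1927719012696750 * m * M ^
  3 + 22106703431396390625 * M ^ 4,
  fun m M => m ^ 4 + 201792 * m ^ 3 * M - 23741566242 * m ^ 2 * M ^ 2 - 948780908712000 * m * M ^
  3 + 22106703431396390625 * M ^ 4,
  fun m M => m ^ 4 - 26910 * m ^ 3 * M - 14818040178 * m ^ 2 * M ^ 2 + 126524808978750 * m * M ^ 3
  + 22106703431396390625 * M ^ 4,
  fun m M => m ^ 4 + 156450 * m ^ 3 * M - 5980472178 * m ^ 2 * M ^ 2 - 735592952981250 * m * M ^ 3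
  + 22106703431396390625 * M ^ 4,
  fun m M => m ^ 4 + 555552 * m ^ 3 * M + 1418436318 * m ^ 2 * M ^ 2 - 2612081407572000 * m * M ^
  3 + 22106703431396390625 * M ^ 4,
  fun m M => m ^ 4 - 145038 * m ^ 3 * M + 90838626318 * m ^ 2 * M ^ 2 + 681936278136750 * m * M ^
  3 + 22106703431396390625 * M ^ 4,
  fun m M => m ^ 4 - 2647278 * m ^ 3 * M - 107186163954 * m ^ 2 * M ^ 2 + 12446909820276750 * m *
  M ^ 3 + 22106703431396390625 * M ^ 4,
  fun m M => m ^ 4 - 2814990 * m ^ 3 * M - 17263050450 * m ^ 2 * M ^ 2 + 76589825421768750 * m * M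
  ^ 3 + 4974008272064187890625 * M ^ 4]

/-- numerators of the `y`-coordinates of the points -/
def yF : Fin 9 → R → R → R := ![
  fun m M => m ^ 6 + 1285416 * m ^ 5 * M + 355645149165 * m ^ 4 * M ^ 2 + 8368327276570800 * m ^ 3
  * M ^ 3 - 1672164049138635268125 * m ^ 2 * M ^ 4 + 28416310297971822851625000 * m * M ^ 5 -
  103940781449546840549994140625 * M ^ 6,
  fun m M => m ^ 6 + 887472 * m ^ 5 * M + 95062049901 * m ^ 4 * M ^ 2 - 3501851085076320 * m ^ 3 *
  M ^ 3 - 446960524149105364125 * m ^ 2 * M ^ 4 + 19619080307668217580750000 * m * M ^ 5 -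
  103940781449546840549994140625 * M ^ 6,
  fun m M => m ^ 6 + 657792 * m ^ 5 * M - 82798023699 * m ^ 4 * M ^ 2 - 8639431486237440 * m ^ 3 *
  M ^ 3 + 389297812424154235875 * m ^ 2 * M ^ 4 + 14541612663545094582000000 * m * M ^ 5 -
  103940781449546840549994140625 * M ^ 6,
  fun m M => m ^ 6 - 15984 * m ^ 5 * M - 27064497555 * m ^ 4 * M ^ 2 + 12285654847200 * m ^ 3 * M
  ^ 3 + 127251221971468651875 * m ^ 2 * M ^ 4 - 353353547647439907750000 * m * M ^ 5 -
  103940781449546840549994140625 * M ^ 6,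
  fun m M => m ^ 6 + 259056 * m ^ 5 * M - 7002555795 * m ^ 4 * M ^ 2 - 2246052457144800 * m ^ 3 *
  M ^ 3 + 32924453152189291875 * m ^ 2 * M ^ 4 + 5726874164123823369750000 * m * M ^ 5 -
  103940781449546840549994140625 * M ^ 6,
  fun m M => m ^ 6 + 1188432 * m ^ 5 * M + 9105466221 * m ^ 4 * M ^ 2 - 9777135310860960 * m ^ 3 *
  M ^ 3 - 42811868237624884125 * m ^ 2 * M ^ 4 + 26272313772381275303250000 * m * M ^ 5 -
  103940781449546840549994140625 * M ^ 6,
  fun m M => m ^ 6 + 1284912 * m ^ 5 * M + 103147431021 * m ^ 4 * M ^ 2 - 41893202213382240 * m ^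
  3 * M ^ 3 - 484976180103337684125 * m ^ 2 * M ^ 4 + 28405168519442399070750000 * m * M ^ 5 -
  103940781449546840549994140625 * M ^ 6,
  fun m M => m ^ 6 + 332208 * m ^ 5 * M - 408812778387 * m ^ 4 * M ^ 2 - 39999222826837344 * m ^ 3
  * M ^ 3 + 1922146365421301803875 * m ^ 2 * M ^ 4 + 7344023733537332136750000 * m * M ^ 5 -
  103940781449546840549994140625 * M ^ 6,
  fun m M => m ^ 6 + 80640 * m ^ 5 * M - 1479896799075 * m ^ 4 * M ^ 2 - 356975977236480000 * m ^
  3 * M ^ 3 + 28141400163012842671875 * m ^ 2 * M ^ 4 + 8079381116479301674500000000 * m * M ^ 5 +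
  350800137392220586856230224609375 * M ^ 6]

/-- derivative values -/
def dD (i : Fin 9) (m M : R) : R := 3 * aF i m M ^ 2 + cA m M * (dF i : R) ^ 4

lemma curve_eq (i : Fin 9) (m M : R) :
    aF i m M ^ 3 + cA m M * aF i m M * ((dF i : R) ^ 2) ^ 2 + cB m M * ((dF i : R) ^ 2) ^ 3
      = yF i m M ^ 2 := by
  fin_cases i <;> simp [aF, yF, cA, cB, dF] <;> ring

lemma map_cA {S : Type*} [CommRing S] (φ : R →+* S) (m M : R) : φ (cA m M) = cA (φ m) (φ M) := by
  simp [cA, map_ofNat]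

lemma map_cB {S : Type*} [CommRing S] (φ : R →+* S) (m M : R) : φ (cB m M) = cB (φ m) (φ M) := by
  simp [cB, map_ofNat]

lemma map_aF {S : Type*} [CommRing S] (φ : R →+* S) (i : Fin 9) (m M : R) :
    φ (aF i m M) = aF i (φ m) (φ M) := by
  fin_cases i <;> simp [aF, map_ofNat]

lemma map_yF {S : Type*} [CommRing S] (φ : R →+* S) (i : Fin 9) (m M : R) :
    φ (yF i m M) = yF i (φ m) (φ M) := by
  fin_cases i <;> simp [yF, map_ofNat]

lemma map_dD {S : Type*} [CommRing S] (φ : R →+* S) (i : Fin 9) (m M : R) :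
    φ (dD i m M) = dD i (φ m) (φ M) := by
  simp [dD, map_aF, map_cA, map_ofNat]

lemma hom_cA (k m M : R) : cA (k * m) (k * M) = k ^ 8 * cA m M := by
  simp only [cA]; ring

lemma hom_cB (k m M : R) : cB (k * m) (k * M) = k ^ 12 * cB m M := by
  simp only [cB]; ring

lemma hom_aF (i : Fin 9) (k m M : R) : aF i (k * m) (k * M) = k ^ 4 * aF i m M := by
  fin_cases i <;> simp [aF] <;> ring

lemma hom_yF (i : Fin 9) (k m M : R) : yF i (k * m) (k * M) = k ^ 6 * yF i m M := by
  fin_cases i <;> simp [yF] <;> ring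

lemma hom_dD (i : Fin 9) (k m M : R) : dD i (k * m) (k * M) = k ^ 8 * dD i m M := by
  simp only [dD, hom_aF, hom_cA]; ring

lemma yF_zero (i : Fin 9) (m : R) : yF i m 0 = m ^ 6 := by
  fin_cases i <;> simp [yF]

lemma yF_monic (i : Fin 9) : (yF i (Polynomial.X : Polynomial ℤ) 1).Monic := by
  fin_cases i <;> simp [yF] <;> monicity!
end family

/-- Bezout certificates modulo 31 -/
lemma bez {R : Type*} [CommRing R] (i : Fin 9) (z : R) (hy : yF i z 1 = 0) (hD : dD i z 1 = 0) :
    ∃ w : R, 31 * w = 1 := by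
  fin_cases i
  · refine ⟨
      36101 * z ^ 12 + 99728052339 * z ^ 11 + 14706139615744148 * z ^ 10 - 1380089679426481479905
      * z ^ 9 - 88822470375934115405492932 * z ^ 8 + 4516944088750788799291305126751 * z ^ 7 -
      42518949844428250662624765207444568 * z ^ 6 + 141669764311991961534339416195034725499 * z ^
      5 + 709540031870587209247204575739483551285 * z ^ 4 -
      425491457334342577685659697945532353550 * z ^ 3 - 520349215494103352627780602437654172500 *
      z ^ 2 + 378296570928304035412098333735672281250 * z +
      189176646380302725180423205278423765121, ?_⟩
    simp [yF] at hy
    simp [dD, aF, cA, dF] at hD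
    linear_combination
      -(9 * z ^ 7 + 10 * z ^ 6 + 15 * z ^ 5 - 11 * z ^ 4 - 13 * z ^ 3 - 5 * z ^ 2 - 10 * z - 14) *
      hy
      - (-3 * z ^ 5 - 15 * z ^ 4 + 9 * z ^ 3 + 11 * z ^ 2 - 8 * z - 4) * hD
  · refine ⟨
      68038 * z ^ 12 + 59281149845 * z ^ 11 + 6782854252556788 * z ^ 10 - 426709064996551615708 *
      z ^ 9 - 31280761275754696472457052 * z ^ 8 + 883698816667175171509974253335 * z ^ 7 +
      10780532218389759736677654836383272 * z ^ 6 - 94604495103053778875113307466835513407 * z ^ 5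
      + 141893263997111258901498938131864692414 * z ^ 4 - 94620670290070081516985420867310132480 *
      z ^ 3 + 283748799046619792219697192753805108500 * z ^ 2 +
      141909439548586808915049233979098859375 * z - 236470808064231009972722273519798891129, ?_⟩
    simp [yF] at hy
    simp [dD, aF, cA, dF] at hD
    linear_combination
      -(-6 * z ^ 7 - z ^ 6 + 13 * z ^ 5 - z ^ 4 - 14 * z ^ 3 - 5 * z ^ 2 - 9) * hy
      - (2 * z ^ 5 - 3 * z ^ 4 + 2 * z ^ 3 - 6 * z ^ 2 - 3 * z + 5) * hD
  · refine ⟨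
      2638 * z ^ 12 - 539817962 * z ^ 11 - 1861662818037736 * z ^ 10 + 90431075045393391132 * z ^
      9 + 13800288081991749515590189 * z ^ 8 - 346147160235563243277693357522 * z ^ 7 -
      13505815353930132605830993497399631 * z ^ 6 + 94649104818275241995635147810416016722 * z ^ 5
      - 425714989958980310940466065097120875315 * z ^ 4 + 473002399456847011779221980238555862900
      * z ^ 3 - 425647454048164133486437580460464518125 * z ^ 2 +
      13507439837521154769749288690156250 * z - 94588323180092577288642553553728578629, ?_⟩
    simp [yF] at hy
    simp [dD, aF, cA, dF] at hD
    linear_combination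
      -(6 * z ^ 7 - 13 * z ^ 6 + 14 * z ^ 5 - 14 * z ^ 4 + 14 * z ^ 2 + 6 * z + 10) * hy
      - (-2 * z ^ 5 + 9 * z ^ 4 - 10 * z ^ 3 + 9 * z ^ 2 + 2) * hD
  · refine ⟨
      z ^ 13 - 40482 * z ^ 12 - 34930911411 * z ^ 11 + 725977380684692 * z ^ 10 +
      323737003492765832799 * z ^ 9 - 3365588186467889929803322 * z ^ 8 -
      851945610546095547766795686316 * z ^ 7 + 4475135755719535790054226666141717 * z ^ 6 +
      567533296718938402529981340481712666217 * z ^ 5 + 425644471310270133150720884860807631715 *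
      z ^ 4 - 378357021970367744020718438928043974225 * z ^ 3 -
      472944972293389863160863676733708443125 * z ^ 2 - 425650438285958486834217935218090265625 *
      z - 378353292844428661207255152935875063004, ?_⟩
    simp [yF] at hy
    simp [dD, aF, cA, dF] at hD
    linear_combination
      -(5 * z ^ 7 + 9 * z ^ 6 + 12 * z ^ 5 - 11 * z ^ 4 + 9 * z ^ 3 + 4 * z ^ 2 + 4 * z + 3) * hy
      - (-12 * z ^ 5 - 9 * z ^ 4 + 8 * z ^ 3 + 10 * z ^ 2 + 9 * z + 8) * hD
  · refine ⟨
      -z ^ 13 - 361516 * z ^ 12 - 14178904591 * z ^ 11 + 4452664205227071 * z ^ 10 +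
      175587749157312979323 * z ^ 9 - 23118375364011450677194056 * z ^ 8 -
      290472562264863391342955712940 * z ^ 7 + 49736760487832732881939113204497625 * z ^ 6 -
      709432319020356377988276210609137295177 * z ^ 5 + 283814706026913700968145206890188472115 *
      z ^ 4 - 709362687287796929404785785060360763525 * z ^ 3 -
      709452213277227647002132746250254802500 * z ^ 2 + 567486834131018220258874308367441359375 *
      z + 614824100928777241783115524626640561996, ?_⟩
    simp [yF] at hy
    simp [dD, aF, cA, dF] at hD
    linear_combination
      -(-14 * z ^ 7 - 2 * z ^ 6 - 2 * z ^ 5 - 12 * z ^ 4 - 15 * z ^ 3 - 15 * z ^ 2 - 11 * z + 12)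
      * hy
      - (15 * z ^ 5 - 6 * z ^ 4 + 15 * z ^ 3 + 15 * z ^ 2 - 12 * z - 13) * hD
  · refine ⟨
      18438 * z ^ 12 + 21635418344 * z ^ 11 - 62626215277265 * z ^ 10 - 211151857991610134366 * z
      ^ 9 + 2199360043084952617463673 * z ^ 8 + 507847950377363581239729823772 * z ^ 7 -
      13864549021370196858838654231074541 * z ^ 6 + 47127715550219880567867328796090697120 * z ^ 5
      + 567529935316723705285246789272187135665 * z ^ 4 + 110970032758196996568383868457259100 * z
      ^ 3 - 378519739829371546116290867475783708750 * z ^ 2 +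
      567557680278294611617241294414891718750 * z - 94588323180092577288642553553728578629, ?_⟩
    simp [yF] at hy
    simp [dD, aF, cA, dF] at hD
    linear_combination
      -(3 * z ^ 7 - 6 * z ^ 6 - 11 * z ^ 5 + 5 * z ^ 4 + 14 * z ^ 3 + 12 * z ^ 2 - 2 * z + 10) *
      hy
      - (-z ^ 5 - 12 * z ^ 4 + 8 * z ^ 2 - 12 * z + 2) * hD
  · refine ⟨
      -z ^ 13 - 1051732 * z ^ 12 + 215645585726 * z ^ 11 + 60427976169118423 * z ^ 10 -
      12055014166539246244039 * z ^ 9 - 294994156145778621635412529 * z ^ 8 +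
      4613394260364019363049864687158 * z ^ 7 + 117934281647086906485761352711827731 * z ^ 6 -
      520235773481638755586622522613677597829 * z ^ 5 + 107214648128833584346440527280891267 * z ^
      4 - 472898732125810598662968845207311131180 * z ^ 3 -
      189208816165258386822266652616732485750 * z ^ 2 + 141732386667217916641369947558328453125 *
      z + 662118262522176458861293151098665952621, ?_⟩
    simp [yF] at hy
    simp [dD, aF, cA, dF] at hD
    linear_combination
      -(-2 * z ^ 7 + 4 * z ^ 6 - 2 * z ^ 5 - z ^ 4 + 4 * z ^ 3 + 10 * z ^ 2 + 2 * z + 8) * hy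
      - (11 * z ^ 5 + 10 * z ^ 3 + 4 * z ^ 2 - 3 * z - 14) * hD
  · refine ⟨
      z ^ 13 + 5947902 * z ^ 12 + 4379798513421 * z ^ 11 + 386886837249338708 * z ^ 10 -
      34799867898523212751713 * z ^ 9 - 1789917210255315149347103386 * z ^ 8 +
      95380568705331367996264620115796 * z ^ 7 - 623727314531593109911750052916793803 * z ^ 6 +
      567062026594375607991294043256760987657 * z ^ 5 + 426063240867971421564198461031434739363 *
      z ^ 4 - 377833531955515025107544805628327836753 * z ^ 3 -
      472473830479144889747173435141886119125 * z ^ 2 - 425231588534715118636519810362368765625 *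
      z - 378353292844428661207255152935875063004, ?_⟩
    simp [yF] at hy
    simp [dD, aF, cA, dF] at hD
    linear_combination
      -(5 * z ^ 7 + 9 * z ^ 6 + 12 * z ^ 5 - 11 * z ^ 4 + 9 * z ^ 3 + 4 * z ^ 2 + 4 * z + 3) * hy
      - (-12 * z ^ 5 - 9 * z ^ 4 + 8 * z ^ 3 + 10 * z ^ 2 + 9 * z + 8) * hD
  · refine ⟨
      z ^ 13 + 6978531 * z ^ 12 + 7651538414325 * z ^ 11 + 140270293035008072 * z ^ 10 -
      587961643711826593422064 * z ^ 9 - 46330773543811862849530641807 * z ^ 8 +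
      8008606740449492897598105651846541 * z ^ 7 + 1104435583983006866705863094573995650242 * z ^
      6 + 35914813890922270284787992733831187908993080 * z ^ 5 +
      26337672535726177888649480644136714585889975 * z ^ 4 +
      23943258349738497787371440475581696632196250 * z ^ 3 +
      19155092615738772270678164822244345213468750 * z ^ 2 +
      31124439306242103835549436554605459498046875 * z -
      33519737038974356949176591490704911140688004, ?_⟩
    simp [yF] at hy
    simp [dD, aF, cA, dF] at hD
    linear_combination
      -(14 * z ^ 7 + 12 * z ^ 6 - 15 * z ^ 5 - 8 * z ^ 4 - 2 * z ^ 3 - 15 * z ^ 2 + 14 * z + 13) *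
      hy
      - (-15 * z ^ 5 - 11 * z ^ 4 - 10 * z ^ 3 - 8 * z ^ 2 - 13 * z + 14) * hD

lemma exists_R (i : Fin 9) : ∃ r : ℤ, r ≠ 0 ∧ ∀ (p : ℕ) (h : ZMod p), yF i h 1 = 0 → dD i h 1 = 0 →
    (r : ZMod p) = 0 := by
  open Polynomial in
  set Y : ℤ[X] := yF i X 1 with hY
  set D : ℤ[X] := dD i X 1 with hD
  have hYe : ∀ {S : Type} [CommRing S] (φ : ℤ[X] →+* S), φ Y = yF i (φ X) 1 := by
    intro S _ φ; rw [hY, map_yF, map_one]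
  have hDe : ∀ {S : Type} [CommRing S] (φ : ℤ[X] →+* S), φ D = dD i (φ X) 1 := by
    intro S _ φ; rw [hD, map_dD, map_one]
  have hcop : IsCoprime (Y.map (Int.castRingHom ℚ)) (D.map (Int.castRingHom ℚ)) := by
    rw [isCoprime_iff_aeval_ne_zero_of_isAlgClosed ℚ ℂ]
    intro z
    by_contra hcon
    push Not at hcon
    obtain ⟨h1, h2⟩ := hcon
    have h1' : aeval z Y = 0 := by
      rw [← h1, aeval_def, aeval_def, eval₂_map]
      congr 1
    have h2' : aeval z D = 0 := by
      rw [← h2, aeval_def, aeval_def, eval₂_map]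
      congr 1
    have hIntg : IsIntegral ℤ z := ⟨Y, yF_monic i, h1'⟩
    let zz : integralClosure ℤ ℂ := ⟨z, hIntg⟩
    have hz : ((aeval zz Y : integralClosure ℤ ℂ) : ℂ) = aeval z Y :=
      (aeval_algebraMap_apply ℂ zz Y).symm
    have hz' : ((aeval zz D : integralClosure ℤ ℂ) : ℂ) = aeval z D :=
      (aeval_algebraMap_apply ℂ zz D).symm
    have k1 : aeval zz Y = 0 := Subtype.ext (by rw [hz, h1']; rfl)
    have k2 : aeval zz D = 0 := Subtype.ext (by rw [hz', h2']; rfl)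
    have l1 := hYe (aeval zz : ℤ[X] →ₐ[ℤ] integralClosure ℤ ℂ).toRingHom
    have l2 := hDe (aeval zz : ℤ[X] →ₐ[ℤ] integralClosure ℤ ℂ).toRingHom
    have l1' : yF i zz 1 = 0 := by
      rw [← k1]; simpa using l1.symm
    have l2' : dD i zz 1 = 0 := by
      rw [← k2]; simpa using l2.symm
    obtain ⟨w, hw⟩ := bez i zz l1' l2'
    have hwi : IsIntegral ℤ ((w : ℂ)) := w.2
    have hwv : (w : ℂ) = algebraMap ℚ ℂ (1 / 31) := by
      have : (31 : ℂ) * w = 1 := by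
        have := congrArg (algebraMap (integralClosure ℤ ℂ) ℂ) hw
        rw [map_mul, map_ofNat, map_one] at this
        exact this
      simp
      field_simp
      linear_combination this
    rw [hwv, isIntegral_algebraMap_iff (algebraMap ℚ ℂ).injective] at hwi
    obtain ⟨n, hn⟩ := IsIntegrallyClosed.isIntegral_iff.1 hwi
    have : (31 : ℤ) * n = 1 := by
      have : (31 : ℚ) * n = 1 := by
        have hn' : (n : ℚ) = 1 / 31 := by simpa using hn
        rw [hn']; norm_num
      exact_mod_cast this
    omega
  obtain ⟨u, v, huv⟩ := hcop
  obtain ⟨b1, hb1⟩ := IsLocalization.integerNormalization_map_to_map (nonZeroDivisors ℤ) u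
  obtain ⟨b2, hb2⟩ := IsLocalization.integerNormalization_map_to_map (nonZeroDivisors ℤ) v
  set u' := IsLocalization.integerNormalization (nonZeroDivisors ℤ) u
  set v' := IsLocalization.integerNormalization (nonZeroDivisors ℤ) v
  have hb1' : u'.map (Int.castRingHom ℚ) = C ((b1 : ℤ) : ℚ) * u := by
    rw [← smul_eq_C_mul]
    exact hb1.trans (by ext; simp)
  have hb2' : v'.map (Int.castRingHom ℚ) = C ((b2 : ℤ) : ℚ) * v := by
    rw [← smul_eq_C_mul]
    exact hb2.trans (by ext; simp)
  have hR : C (b2 : ℤ) * u' * Y + C (b1 : ℤ) * v' * D = C ((b1 : ℤ) * b2) := by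
    apply map_injective (Int.castRingHom ℚ) Int.cast_injective
    simp only [Polynomial.map_add, Polynomial.map_mul, hb1', hb2', map_C, map_mul]
    simp only [Int.coe_castRingHom]
    linear_combination C ((b1 : ℤ) : ℚ) * C ((b2 : ℤ) : ℚ) * huv
  refine ⟨b1 * b2, mul_ne_zero (nonZeroDivisors.coe_ne_zero b1) (nonZeroDivisors.coe_ne_zero b2), ?_⟩
  intro p h h1 h2
  have e1 := hYe (eval₂RingHom (Int.castRingHom (ZMod p)) h)
  have e2 := hDe (eval₂RingHom (Int.castRingHom (ZMod p)) h)
  have e3 := congrArg (eval₂RingHom (Int.castRingHom (ZMod p)) h) hR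
  have e4 : eval₂RingHom (Int.castRingHom (ZMod p)) h X = h := by simp
  rw [e4, h1] at e1
  rw [e4, h2] at e2
  rw [map_add, map_mul, map_mul _ _ D, e1, e2, mul_zero, mul_zero, add_zero] at e3
  rw [Polynomial.coe_eval₂RingHom, Polynomial.eval₂_C] at e3
  simpa using e3.symm

/-- the modulus -/
def cN : ℕ := 946910001020799895

/-- the residue class -/
def cc : ℤ := 228520271231199531

lemma exists_M : ∃ M : ℕ, 0 < M ∧ (M : ℤ) ≡ 1 [ZMOD cN] ∧
    ∀ (p : ℕ) (_ : p.Prime) (i : Fin 9) (h : ZMod p), yF i h 1 = 0 → dD i h 1 = 0 →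
      p ∣ cN ∨ p ∣ M := by
  choose r hr0 hr using exists_R
  set S : Finset ℕ := (∏ i, r i).natAbs.primeFactors.filter (fun p => ¬ p ∣ cN) with hS
  have hcop : Nat.Coprime (∏ p ∈ S, p) cN := by
    refine Nat.Coprime.prod_left fun p hp => ?_
    rw [hS, Finset.mem_filter, Nat.mem_primeFactors] at hp
    exact (Nat.Prime.coprime_iff_not_dvd hp.1.1).2 hp.2
  have hpos : 0 < ∏ p ∈ S, p := by
    refine Finset.prod_pos fun p hp => ?_
    rw [hS, Finset.mem_filter, Nat.mem_primeFactors] at hp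
    exact hp.1.1.pos
  refine ⟨(∏ p ∈ S, p) ^ Nat.totient cN, pow_pos hpos _, ?_, ?_⟩
  · have := Nat.ModEq.pow_totient hcop
    exact_mod_cast (Int.natCast_modEq_iff.2 this)
  · intro p hp i h h1 h2
    by_cases hpN : p ∣ cN
    · exact Or.inl hpN
    right
    have hz := hr i p h h1 h2
    rw [ZMod.intCast_zmod_eq_zero_iff_dvd] at hz
    have hdv : (p : ℤ) ∣ ∏ i, r i := hz.trans (Finset.dvd_prod_of_mem r (Finset.mem_univ i))
    have hmem : p ∈ S := by
      rw [hS, Finset.mem_filter, Nat.mem_primeFactors]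
      refine ⟨⟨hp, Int.natCast_dvd.1 hdv, ?_⟩, hpN⟩
      rw [Int.natAbs_ne_zero]
      exact Finset.prod_ne_zero_iff.2 fun i _ => hr0 i
    refine (Finset.dvd_prod_of_mem (fun p : ℕ => p) hmem).trans (dvd_pow_self _ ?_)
    exact (Nat.totient_pos.2 (by norm_num [cN])).ne'

lemma cA_pos (m M : ℤ) (hM : 0 < M) (h : 3000000 * M ≤ m) : 0 < cA m M := by
  set q1 := m ^ 2 - 4701776625 * M ^ 2 with h1
  set q2 := 2 * m * M with h2
  have e : cA m M = q2 * (25110 * q1 ^ 3 - 3694798395 * (q1 ^ 2 * q2) - 70335440911080 * (q1 * q2 ^ 2)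
      - 1285679337570081072 * q2 ^ 3) := by
    rw [h1, h2]; unfold cA; ring
  have hm : 0 < m := by linarith
  have hq2 : 0 < q2 := by positivity
  have hq : 1000000 * q2 ≤ q1 := by
    rw [h1, h2]; nlinarith
  have hq1 : 0 < q1 := by linarith
  have k3 : 1000000 * q2 ^ 3 ≤ q1 * q2 ^ 2 := by nlinarith [pow_pos hq2 2]
  have k2 : 1000000 * (q1 * q2 ^ 2) ≤ q1 ^ 2 * q2 := by nlinarith [mul_pos hq1 hq2]
  have k1 : 1000000 * (q1 ^ 2 * q2) ≤ q1 ^ 3 := by nlinarith [pow_pos hq1 2]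
  have hp : 0 < q1 ^ 3 := by positivity
  have hp2 : 0 < q1 ^ 2 * q2 := by positivity
  have hp3 : 0 < q1 * q2 ^ 2 := by positivity
  rw [e]
  refine mul_pos hq2 ?_
  nlinarith

lemma coprime_N (m M : ℤ) (hm : m ≡ cc [ZMOD cN]) (hM : M ≡ 1 [ZMOD cN]) (i : Fin 9) :
    IsCoprime (yF i m M) (cN : ℤ) := by
  have h0 : IsCoprime (yF i cc 1) (cN : ℤ) := by
    rw [Int.isCoprime_iff_gcd_eq_one]
    fin_cases i <;> simp [yF, cc, cN] <;> norm_num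
  rw [isCoprime_comm, ← ZMod.coe_int_isUnit_iff_isCoprime] at h0 ⊢
  have e : ((yF i m M : ℤ) : ZMod cN) = ((yF i cc 1 : ℤ) : ZMod cN) := by
    have h1 := map_yF (Int.castRingHom (ZMod cN)) i m M
    have h2 := map_yF (Int.castRingHom (ZMod cN)) i cc 1
    simp only [Int.coe_castRingHom] at h1 h2
    rw [h1, h2, (ZMod.intCast_eq_intCast_iff _ _ _).2 hm, (ZMod.intCast_eq_intCast_iff _ _ _).2 hM]
  rw [e]; exact h0

lemma dF_ne (i : Fin 9) : dF i ≠ 0 := by fin_cases i <;> simp [dF]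

lemma coprime_yD (m : ℤ) (M : ℕ) (hM1 : (M : ℤ) ≡ 1 [ZMOD cN])
    (hMp : ∀ (p : ℕ) (_ : p.Prime) (i : Fin 9) (h : ZMod p), yF i h 1 = 0 → dD i h 1 = 0 →
      p ∣ cN ∨ p ∣ M)
    (hm : m ≡ cc [ZMOD cN]) (hm1 : m ≡ 1 [ZMOD M]) (i : Fin 9) :
    IsCoprime (yF i m (M : ℤ)) (dD i m (M : ℤ)) := by
  rw [Int.isCoprime_iff_gcd_eq_one]
  by_contra hne
  obtain ⟨p, hp, hpd⟩ := Nat.exists_prime_and_dvd hne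
  have : Fact p.Prime := ⟨hp⟩
  have hy : (p : ℤ) ∣ yF i m (M : ℤ) := (Int.natCast_dvd_natCast.2 hpd).trans (Int.gcd_dvd_left _ _)
  have hD : (p : ℤ) ∣ dD i m (M : ℤ) := (Int.natCast_dvd_natCast.2 hpd).trans (Int.gcd_dvd_right _ _)
  have hpN : ¬ p ∣ cN := by
    intro h
    have := (coprime_N m M hm hM1 i).isUnit_of_dvd' hy (Int.natCast_dvd_natCast.2 h)
    rw [Int.isUnit_iff_natAbs_eq] at this
    simp at this
    exact hp.one_lt.ne' this
  rw [← ZMod.intCast_zmod_eq_zero_iff_dvd] at hy hD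
  have h1 := map_yF (Int.castRingHom (ZMod p)) i m M
  have h2 := map_dD (Int.castRingHom (ZMod p)) i m M
  simp only [Int.coe_castRingHom, Int.cast_natCast] at h1 h2
  rw [hy] at h1
  rw [hD] at h2
  by_cases hpM : p ∣ M
  · have hM0 : (M : ZMod p) = 0 := (ZMod.natCast_eq_zero_iff _ _).2 hpM
    have hm2 : (m : ZMod p) = 1 := by
      have := (ZMod.intCast_eq_intCast_iff _ _ p).2 (hm1.of_dvd (Int.natCast_dvd_natCast.2 hpM))
      simpa using this
    rw [hM0, hm2, yF_zero] at h1
    simp at h1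
  · have hM0 : (M : ZMod p) ≠ 0 := fun h => hpM ((ZMod.natCast_eq_zero_iff _ _).1 h)
    have e : (m : ZMod p) = M * (m / M) := by field_simp
    have e1 : (M : ZMod p) = M * 1 := by ring
    have h1' : yF i (m : ZMod p) (M : ZMod p) = M ^ 6 * yF i ((m : ZMod p) / M) 1 := by
      rw [← hom_yF, ← e, ← e1]
    have h2' : dD i (m : ZMod p) (M : ZMod p) = M ^ 8 * dD i ((m : ZMod p) / M) 1 := by
      rw [← hom_dD, ← e, ← e1]
    rw [h1'] at h1
    rw [h2'] at h2
    have k1 := (mul_eq_zero.1 h1.symm).resolve_left (pow_ne_zero _ hM0)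
    have k2 := (mul_eq_zero.1 h2.symm).resolve_left (pow_ne_zero _ hM0)
    rcases hMp p hp i _ k1 k2 with h | h
    · exact hpN h
    · exact hpM h

lemma aux_prime (q : ℕ) (hq : q.Prime) (hqN : q ∣ cN) (h ρ : ℤ) (hh : cc ≡ h [ZMOD q]) (m M : ℤ)
    (hm : m ≡ cc [ZMOD cN]) (hM : M ≡ 1 [ZMOD cN]) (j : Fin 9)
    (k0 : (q : ℤ) ∣ ρ ^ 3 + cA h 1 * ρ + cB h 1) (k1 : ¬ (q : ℤ) ∣ 3 * ρ ^ 2 + cA h 1)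
    (k2 : ∀ i, jacobiSym (aF i h 1 - dF i ^ 2 * ρ) q = if i = j then -1 else 1) :
    ∃ (q : ℕ) (_ : Fact q.Prime) (ρ : ℤ), (q : ℤ) ∣ ρ ^ 3 + cA m M * ρ + cB m M ∧
      ¬ (q : ℤ) ∣ 3 * ρ ^ 2 + cA m M ∧
      ∀ i, legendreSym q (aF i m M - dF i ^ 2 * ρ) = if i = j then -1 else 1 := by
  have fq : Fact q.Prime := ⟨hq⟩
  have em : (m : ZMod q) = (h : ZMod q) := (ZMod.intCast_eq_intCast_iff _ _ _).2
    ((hm.of_dvd (Int.natCast_dvd_natCast.2 hqN)).trans hh)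
  have eM : (M : ZMod q) = ((1 : ℤ) : ZMod q) := (ZMod.intCast_eq_intCast_iff _ _ _).2
    (hM.of_dvd (Int.natCast_dvd_natCast.2 hqN))
  have eA : ((cA m M : ℤ) : ZMod q) = ((cA h 1 : ℤ) : ZMod q) := by
    have h1 := map_cA (Int.castRingHom (ZMod q)) m M
    have h2 := map_cA (Int.castRingHom (ZMod q)) h 1
    simp only [Int.coe_castRingHom] at h1 h2
    rw [h1, h2, em, eM]
  have eB : ((cB m M : ℤ) : ZMod q) = ((cB h 1 : ℤ) : ZMod q) := by
    have h1 := map_cB (Int.castRingHom (ZMod q)) m M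
    have h2 := map_cB (Int.castRingHom (ZMod q)) h 1
    simp only [Int.coe_castRingHom] at h1 h2
    rw [h1, h2, em, eM]
  have ea : ∀ i, ((aF i m M : ℤ) : ZMod q) = ((aF i h 1 : ℤ) : ZMod q) := by
    intro i
    have h1 := map_aF (Int.castRingHom (ZMod q)) i m M
    have h2 := map_aF (Int.castRingHom (ZMod q)) i h 1
    simp only [Int.coe_castRingHom] at h1 h2
    rw [h1, h2, em, eM]
  refine ⟨q, fq, ρ, ?_, ?_, ?_⟩
  · rw [← ZMod.intCast_zmod_eq_zero_iff_dvd] at k0 ⊢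
    push_cast at k0 ⊢
    rw [eA, eB]; exact k0
  · rw [← ZMod.intCast_zmod_eq_zero_iff_dvd] at k1 ⊢
    push_cast at k1 ⊢
    rw [eA]; exact k1
  · intro i
    rw [← k2 i, ← jacobiSym.legendreSym.to_jacobiSym]
    unfold legendreSym
    push_cast
    rw [ea]

lemma no_root_five (m M : ℤ) (hm : m ≡ cc [ZMOD cN]) (hM : M ≡ 1 [ZMOD cN]) (x : ZMod 5) :
    x ^ 3 + (cA m M : ℤ) * x + (cB m M : ℤ) ≠ 0 := by
  have em : (m : ZMod 5) = 1 := by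
    have h1 : m ≡ 1 [ZMOD (5 : ℕ)] :=
      (hm.of_dvd (by norm_num [cN])).trans (by norm_num [cc, Int.ModEq])
    simpa using (ZMod.intCast_eq_intCast_iff _ _ _).2 h1
  have eM : (M : ZMod 5) = 1 := by
    have h1 : M ≡ 1 [ZMOD (5 : ℕ)] := hM.of_dvd (by norm_num [cN])
    simpa using (ZMod.intCast_eq_intCast_iff _ _ _).2 h1
  have eA : ((cA m M : ℤ) : ZMod 5) = ((cA (1 : ℤ) 1 % 5 : ℤ) : ZMod 5) := by
    have h1 := map_cA (Int.castRingHom (ZMod 5)) m M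
    have h2 := map_cA (Int.castRingHom (ZMod 5)) 1 1
    simp only [Int.coe_castRingHom, Int.cast_one] at h1 h2
    rw [h1, em, eM, ← h2]
    exact (ZMod.intCast_mod _ 5).symm
  have eB : ((cB m M : ℤ) : ZMod 5) = ((cB (1 : ℤ) 1 % 5 : ℤ) : ZMod 5) := by
    have h1 := map_cB (Int.castRingHom (ZMod 5)) m M
    have h2 := map_cB (Int.castRingHom (ZMod 5)) 1 1
    simp only [Int.coe_castRingHom, Int.cast_one] at h1 h2
    rw [h1, em, eM, ← h2]
    exact (ZMod.intCast_mod _ 5).symm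
  rw [eA, eB]
  norm_num [cA, cB]
  revert x
  decide

lemma all_primes (m M : ℤ)
    (hm : m ≡ cc [ZMOD cN]) (hM : M ≡ 1 [ZMOD cN]) (j : Fin 9) :
    ∃ (q : ℕ) (_ : Fact q.Prime) (ρ : ℤ), (q : ℤ) ∣ ρ ^ 3 + cA m M * ρ + cB m M ∧
      ¬ (q : ℤ) ∣ 3 * ρ ^ 2 + cA m M ∧
      ∀ i, legendreSym q (aF i m M - dF i ^ 2 * ρ) = if i = j then -1 else 1 := by
  fin_cases j
  · refine aux_prime 67 (by norm_num) (by norm_num [cN]) 6 27 (by norm_num [cc, Int.ModEq]) m M hm hM _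
      (by norm_num [cA, cB]) (by norm_num [cA]) (fun i => ?_)
    fin_cases i <;> simp [aF, dF] <;> norm_num
  · refine aux_prime 109 (by norm_num) (by norm_num [cN]) 69 32 (by norm_num [cc, Int.ModEq]) m M hm hM _
      (by norm_num [cA, cB]) (by norm_num [cA]) (fun i => ?_)
    fin_cases i <;> simp [aF, dF] <;> norm_num
  · refine aux_prime 103 (by norm_num) (by norm_num [cN]) 96 61 (by norm_num [cc, Int.ModEq]) m M hm hM _
      (by norm_num [cA, cB]) (by norm_num [cA]) (fun i => ?_)
    fin_cases i <;> simp [aF, dF] <;> norm_num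
  · refine aux_prime 53 (by norm_num) (by norm_num [cN]) 34 6 (by norm_num [cc, Int.ModEq]) m M hm hM _
      (by norm_num [cA, cB]) (by norm_num [cA]) (fun i => ?_)
    fin_cases i <;> simp [aF, dF] <;> norm_num
  · refine aux_prime 107 (by norm_num) (by norm_num [cN]) 97 65 (by norm_num [cc, Int.ModEq]) m M hm hM _
      (by norm_num [cA, cB]) (by norm_num [cA]) (fun i => ?_)
    fin_cases i <;> simp [aF, dF] <;> norm_num
  · refine aux_prime 71 (by norm_num) (by norm_num [cN]) 37 47 (by norm_num [cc, Int.ModEq]) m M hm hM _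
      (by norm_num [cA, cB]) (by norm_num [cA]) (fun i => ?_)
    fin_cases i <;> simp [aF, dF] <;> norm_num
  · refine aux_prime 41 (by norm_num) (by norm_num [cN]) 15 28 (by norm_num [cc, Int.ModEq]) m M hm hM _
      (by norm_num [cA, cB]) (by norm_num [cA]) (fun i => ?_)
    fin_cases i <;> simp [aF, dF] <;> norm_num
  · refine aux_prime 101 (by norm_num) (by norm_num [cN]) 68 67 (by norm_num [cc, Int.ModEq]) m M hm hM _
      (by norm_num [cA, cB]) (by norm_num [cA]) (fun i => ?_)
    fin_cases i <;> simp [aF, dF] <;> norm_num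
  · refine aux_prime 151 (by norm_num) (by norm_num [cN]) 13 11 (by norm_num [cc, Int.ModEq]) m M hm hM _
      (by norm_num [cA, cB]) (by norm_num [cA]) (fun i => ?_)
    fin_cases i <;> simp [aF, dF] <;> norm_num

theorem good (m : ℤ) (M : ℕ) (hM0 : 0 < M) (hM1 : (M : ℤ) ≡ 1 [ZMOD cN])
    (hMp : ∀ (p : ℕ) (_ : p.Prime) (i : Fin 9) (h : ZMod p), yF i h 1 = 0 → dD i h 1 = 0 →
      p ∣ cN ∨ p ∣ M)
    (hm : m ≡ cc [ZMOD cN]) (hm1 : m ≡ 1 [ZMOD M]) (hbig : 3000000 * (M : ℤ) ≤ m)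
    (t : AlgebraicClosure ℚ)
    (ht : t ^ 3 + (cA m (M : ℤ) : ℤ) * t + (cB m (M : ℤ) : ℤ) = 0) :
    Module.finrank ℚ (IntermediateField.adjoin ℚ {t}) = 3 ∧
      ∃ f : Multiplicative (Fin 8 → ZMod 2) →* ClassGroup (𝓞 (IntermediateField.adjoin ℚ {t})),
        Function.Injective f := by
  refine single (cA m M) (cB m M) (cA_pos m M (by exact_mod_cast hM0) hbig)
    (fun i => aF i m M) (fun i => dF i ^ 2) (fun i => yF i m M)
    (fun i => by simpa using curve_eq i m (M : ℤ)) (fun i h0 => ?_) (fun i => pow_ne_zero 2 (dF_ne i))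
    (fun i => ?_) (no_root_five m M hm hM1) (all_primes m M hm hM1) t ht
  · have := coprime_N m M hm hM1 i
    have h0' : yF i m (M : ℤ) = 0 := h0
    rw [h0', isCoprime_zero_left, Int.isUnit_iff_natAbs_eq] at this
    simp [cN] at this
  · have := coprime_yD m M hM1 hMp hm hm1 i
    unfold dD at this
    convert this using 1
    push_cast
    ring


/-- The (negated) discriminant `4 A ^ 3 + 27 B ^ 2` of the family. -/
def dl {R : Type*} [CommRing R] (m M : R) : R := 4 * cA m M ^ 3 + 27 * cB m M ^ 2

lemma map_dl {R S : Type*} [CommRing R] [CommRing S] (φ : R →+* S) (m M : R) :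
    φ (dl m M) = dl (φ m) (φ M) := by
  simp [dl, map_cA, map_cB, map_ofNat]

lemma hom_dl {R : Type*} [CommRing R] (k m M : R) : dl (k * m) (k * M) = k ^ 24 * dl m M := by
  simp only [dl, hom_cA, hom_cB]; ring

lemma crt_two (a b x y L : ℤ) (ha : 0 < a) (hb : 0 < b) (h : IsCoprime a b) :
    ∃ m : ℤ, L ≤ m ∧ m ≡ x [ZMOD a] ∧ m ≡ y [ZMOD b] := by
  obtain ⟨u, v, huv⟩ := h
  set z := x * (v * b) + y * (u * a) with hz
  have hab : 1 ≤ a * b := Int.add_one_le_iff.mpr (mul_pos ha hb)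
  refine ⟨z + a * b * |L - z|, ?_, ?_, ?_⟩
  · nlinarith [le_abs_self (L - z), abs_nonneg (L - z)]
  · refine (Int.modEq_iff_dvd.mpr ⟨(x - y) * u - b * |L - z|, ?_⟩)
    rw [hz]; linear_combination (-x) * huv
  · refine (Int.modEq_iff_dvd.mpr ⟨(y - x) * v - a * |L - z|, ?_⟩)
    rw [hz]; linear_combination (-y) * huv

lemma exists_m (M : ℕ) (hM0 : 0 < M) (hM1 : (M : ℤ) ≡ 1 [ZMOD cN]) (p : ℕ → ℕ)
    (hp : ∀ k, (p k).Prime) (hinj : Function.Injective p) (hbig : ∀ k, cN * M < p k) (k : ℕ) :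
    ∃ m : ℤ, 3000000 * (M : ℤ) ≤ m ∧ m ≡ cc [ZMOD cN] ∧ m ≡ 1 [ZMOD M] ∧
      (∀ j < k, m ≡ M [ZMOD p j]) ∧ m ≡ 2 * M [ZMOD p k] := by
  have hcN : 0 < cN := by norm_num [cN]
  have hc1 : IsCoprime (cN : ℤ) (M : ℤ) := by
    obtain ⟨c, hc⟩ := hM1.dvd
    exact ⟨c, 1, by linear_combination -hc⟩
  have hcop : ∀ j, IsCoprime ((cN : ℤ) * M) (p j : ℤ) := by
    intro j
    rw [← Nat.cast_mul, Nat.isCoprime_iff_coprime]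
    exact (Nat.coprime_of_lt_prime (by positivity) (hbig j) (hp j)).symm
  have hpp : ∀ i j, i ≠ j → IsCoprime (p i : ℤ) (p j : ℤ) := by
    intro i j hij
    rw [Nat.isCoprime_iff_coprime, Nat.coprime_primes (hp i) (hp j)]
    exact fun h => hij (hinj h)
  have hppos : ∀ j, (0 : ℤ) < p j := fun j => by exact_mod_cast (hp j).pos
  set W : ℤ := ∏ j ∈ Finset.range k, (p j : ℤ) with hW
  have hWpos : 0 < W := Finset.prod_pos fun j _ => hppos j
  have hM0' : (0 : ℤ) < M := by exact_mod_cast hM0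
  have hcN' : (0 : ℤ) < cN := by exact_mod_cast hcN
  obtain ⟨x, -, hx1, hx2⟩ := crt_two cN M cc 1 0 hcN' hM0' hc1
  obtain ⟨y, -, hy1, hy2⟩ := crt_two W (p k) M (2 * M) 0 hWpos (hppos k)
    (IsCoprime.prod_left fun j hj => hpp j k (Finset.mem_range.mp hj).ne)
  obtain ⟨m, hL, hm1, hm2⟩ := crt_two (cN * M) (W * p k) x y (3000000 * M)
    (mul_pos hcN' hM0') (mul_pos hWpos (hppos k))
    (IsCoprime.mul_right (IsCoprime.prod_right fun j _ => hcop j) (hcop k))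
  refine ⟨m, hL, ?_, ?_, ?_, ?_⟩
  · exact (hm1.of_dvd (dvd_mul_right _ _)).trans hx1
  · exact (hm1.of_dvd (dvd_mul_left _ _)).trans hx2
  · intro j hj
    have hd : (p j : ℤ) ∣ W := Finset.dvd_prod_of_mem _ (Finset.mem_range.mpr hj)
    exact (hm2.of_dvd (hd.mul_right _)).trans (hy1.of_dvd hd)
  · exact (hm2.of_dvd (dvd_mul_left _ _)).trans hy2

lemma exists_primes (L : ℕ) : ∃ p : ℕ → ℕ, Function.Injective p ∧ ∀ k, (p k).Prime ∧ L < p k ∧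
    ¬ IsSquare (((dl (1 : ℤ) 1 * dl 2 1 : ℤ)) : ZMod (p k)) := by
  obtain ⟨D, hD⟩ : ∃ D : ℤ, D = dl (1 : ℤ) 1 * dl 2 1 := ⟨_, rfl⟩
  have h5 : jacobiSym D 5 = -1 := by
    rw [hD]; norm_num [dl, cA, cB]
  have hD0 : D ≠ 0 := by
    rintro rfl
    rw [jacobiSym.zero_left (by norm_num)] at h5
    norm_num at h5
  have hgcd : D.gcd 5 = 1 := by
    by_contra h
    have := (jacobiSym.eq_zero_iff_not_coprime (a := D) (b := 5)).mpr h
    omega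
  have hcop : IsCoprime (5 : ℤ) ((4 * D.natAbs : ℕ) : ℤ) := by
    push_cast
    refine IsCoprime.mul_right ⟨1, -1, by norm_num⟩ ?_
    rw [IsCoprime.abs_right_iff]
    exact (Int.isCoprime_iff_gcd_eq_one.mpr hgcd).symm
  rw [← hD]
  have hinf : {p : ℕ | p.Prime ∧ L < p ∧ ¬ IsSquare ((D : ℤ) : ZMod p)}.Infinite := by
    refine Set.infinite_of_forall_exists_gt fun n => ?_
    obtain ⟨p, hpn, hp, hmod⟩ := Nat.forall_exists_prime_gt_and_zmodEq (max n (max L 5))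
      (q := 4 * D.natAbs) (a := 5) (by positivity) hcop
    refine ⟨p, ⟨hp, by omega, ?_⟩, by omega⟩
    have hodd : Odd p := hp.odd_of_ne_two (by omega)
    have hmod' : p ≡ 5 [MOD 4 * D.natAbs] := by
      rw [← Int.natCast_modEq_iff]; exact_mod_cast hmod
    have hJ : jacobiSym D p = -1 := by
      rw [jacobiSym.mod_right D hodd, hmod', ← jacobiSym.mod_right D (by decide), h5]
    have := Fact.mk hp
    rw [← jacobiSym.legendreSym.to_jacobiSym, legendreSym.eq_neg_one_iff] at hJ
    exact hJ
  refine ⟨fun k => hinf.natEmbedding _ k, fun a b h => ?_, fun k => (hinf.natEmbedding _ k).2⟩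
  exact (hinf.natEmbedding _).injective (Subtype.ext h)

lemma fields_ne (M p : ℕ) (hp : p.Prime) (hMp : ¬ p ∣ M)
    (hns : ¬ IsSquare (((dl (1 : ℤ) 1 * dl 2 1 : ℤ)) : ZMod p)) (m m' : ℤ)
    (hm : m ≡ 2 * M [ZMOD p]) (hm' : m' ≡ M [ZMOD p]) (s : ℚ)
    (h : ((dl m' (M : ℤ) : ℤ) : ℚ) = s ^ 2 * (dl m (M : ℤ) : ℤ)) : False := by
  have := Fact.mk hp
  have hsq : IsSquare (dl m (M : ℤ) * dl m' (M : ℤ)) := by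
    rw [← Rat.isSquare_intCast_iff]
    exact ⟨s * (dl m (M : ℤ) : ℤ), by push_cast; rw [h]; ring⟩
  obtain ⟨r, hr⟩ := hsq
  have hM : (M : ZMod p) ≠ 0 := by rwa [Ne, ZMod.natCast_eq_zero_iff]
  have e1 : (m : ZMod p) = M * 2 := by
    rw [(ZMod.intCast_eq_intCast_iff _ _ _).mpr hm]; push_cast; ring
  have e2 : (m' : ZMod p) = M * 1 := by
    rw [(ZMod.intCast_eq_intCast_iff _ _ _).mpr hm']; push_cast; ring
  have key := congrArg (Int.castRingHom (ZMod p)) hr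
  rw [map_mul, map_mul, map_dl, map_dl] at key
  simp only [eq_intCast, e1, e2, Int.cast_natCast] at key
  have c : dl ((M : ZMod p) * 2) M = (M : ZMod p) ^ 24 * dl 2 1 := by
    rw [← hom_dl, mul_one]
  have c' : dl ((M : ZMod p) * 1) M = (M : ZMod p) ^ 24 * dl 1 1 := by
    rw [← hom_dl, mul_one]
  rw [c, c'] at key
  apply hns
  refine ⟨(r : ZMod p) / (M : ZMod p) ^ 24, ?_⟩
  have e3 : (((dl (1 : ℤ) 1 * dl 2 1 : ℤ)) : ZMod p) = dl 1 1 * dl 2 1 := by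
    rw [← eq_intCast (Int.castRingHom (ZMod p)), map_mul, map_dl, map_dl]
    simp
  rw [e3]
  field_simp
  linear_combination key

/-- There are infinitely many pairwise non-isomorphic cubic number fields whose ideal
class group contains a subgroup isomorphic to `(ℤ/2ℤ)^8`: the set of intermediate
fields `K` of `ℚ̄/ℚ` with `[K : ℚ] = 3` admitting an injective group homomorphism
from `(ℤ/2ℤ)^8` into the ideal class group of the ring of integers of `K` is infinite. -/
theorem infinitely_many_cubic_fields_with_two_rank_eight :
    {K : IntermediateField ℚ (AlgebraicClosure ℚ) |
      Module.finrank ℚ K = 3 ∧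
      ∃ f : Multiplicative (Fin 8 → ZMod 2) →*
          ClassGroup (NumberField.RingOfIntegers K),
        Function.Injective f}.Infinite := by
  obtain ⟨M, hM0, hM1, hMp⟩ := exists_M
  obtain ⟨p, hinj, hp⟩ := exists_primes (cN * M)
  choose m hbig hm hm1 hmj hmk using exists_m M hM0 hM1 p (fun k => (hp k).1) hinj
    (fun k => (hp k).2.1)
  have hroot : ∀ k, ∃ t : AlgebraicClosure ℚ,
      t ^ 3 + (cA (m k) (M : ℤ) : ℤ) * t + (cB (m k) (M : ℤ) : ℤ) = 0 := by
    intro k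
    have hdeg : (Polynomial.X ^ 3 + Polynomial.C ((cA (m k) (M : ℤ) : ℤ) : AlgebraicClosure ℚ)
        * Polynomial.X + Polynomial.C ((cB (m k) (M : ℤ) : ℤ) : AlgebraicClosure ℚ)).degree = 3 := by
      compute_degree!
    obtain ⟨t, ht⟩ := IsAlgClosed.exists_root
      (Polynomial.X ^ 3 + Polynomial.C ((cA (m k) (M : ℤ) : ℤ) : AlgebraicClosure ℚ) * Polynomial.X
        + Polynomial.C ((cB (m k) (M : ℤ) : ℤ) : AlgebraicClosure ℚ)) (by
          rw [hdeg]; norm_num)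
    refine ⟨t, ?_⟩
    simpa [Polynomial.IsRoot] using ht
  choose t ht using hroot
  have hne : ∀ j k, j < k →
      IntermediateField.adjoin ℚ {t j} ≠ IntermediateField.adjoin ℚ {t k} := by
    intro j k hjk hK
    obtain ⟨s, hs⟩ := disc_sq _ _ _ _ (no_root_five (m j) M (hm j) hM1)
      (no_root_five (m k) M (hm k) hM1) (t j) (t k) (ht j) (ht k) hK
    refine fields_ne M (p j) (hp j).1 (fun hd => ?_) (hp j).2.2 (m j) (m k) (hmk j) (hmj k j hjk) s ?_
    · have h1 := Nat.le_of_dvd hM0 hd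
      have h2 := (hp j).2.1
      have h3 : 1 * M ≤ cN * M := Nat.mul_le_mul_right _ (by norm_num [cN])
      omega
    · simp only [dl]; push_cast; exact hs
  refine Set.infinite_of_injective_forall_mem
    (f := fun k => IntermediateField.adjoin ℚ {t k}) (fun j k h => ?_) (fun k => ?_)
  · rcases lt_trichotomy j k with hlt | heq | hgt
    · exact absurd h (hne j k hlt)
    · exact heq
    · exact absurd h.symm (hne k j hgt)
  · exact good (m k) M hM0 hM1 hMp (hm k) (hm1 k) (hbig k) (t k) (ht k)
end

section
/- The eight points of the projective plane ℙ²(ℚ) with homogeneous coordinates (0:−2:1), (3:−9:1), (3:7:1), (8:26:1), (15:63:1), (24:124:1), (48:342:1), (0:0:1) are in general position: (a) no three of them are collinear, i.e., for any three distinct points among them the 3×3 matrix of their coordinate vectors has nonzero determinant; (b) no six of them lie on a conic, i.e., there is no nonzero homogeneous polynomial of degree 2 in ℚ[x,y,z] vanishing at six distinct points among them; (c) every nonzero homogeneous cubic polynomial F ∈ ℚ[x,y,z] vanishing at all eight points is nonsingular at each of them, i.e., at each of the eight points at least one of the partial derivatives F_x, F_y, F_z does not vanish. -/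
open MvPolynomial

/-- The eight rational points of Example 2.6, given by homogeneous coordinate
vectors in `ℚ³`. -/
def examplePoints : Fin 8 → Fin 3 → ℚ :=
  ![![0, -2, 1], ![3, -9, 1], ![3, 7, 1], ![8, 26, 1],
    ![15, 63, 1], ![24, 124, 1], ![48, 342, 1], ![0, 0, 1]]

/-- Every ternary quadratic form is an explicit combination of the six monomials. -/
lemma exists_quadratic (F : MvPolynomial (Fin 3) ℚ) (hF : F.IsHomogeneous 2) :
    ∃ a b c d e f : ℚ, F = C a * X 0 ^ 2 + C b * (X 0 * X 1) + C c * (X 0 * X 2)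
      + C d * X 1 ^ 2 + C e * (X 1 * X 2) + C f * X 2 ^ 2 := by
  rw [F.as_sum]
  refine Finset.sum_induction _ (fun G : MvPolynomial (Fin 3) ℚ => ∃ a b c d e f : ℚ,
      G = C a * X 0 ^ 2 + C b * (X 0 * X 1) + C c * (X 0 * X 2)
      + C d * X 1 ^ 2 + C e * (X 1 * X 2) + C f * X 2 ^ 2) ?_ ?_ ?_
  · rintro _ _ ⟨a, b, c, d, e, f, rfl⟩ ⟨a', b', c', d', e', f', rfl⟩
    refine ⟨a + a', b + b', c + c', d + d', e + e', f + f', ?_⟩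
    simp only [C_add]
    ring
  · exact ⟨0, 0, 0, 0, 0, 0, by simp⟩
  · intro m hm
    have hd := hF (mem_support_iff.mp hm)
    change Finsupp.weight (fun _ => 1) m = _ at hd
    rw [← Finsupp.degree_eq_weight_one, Finsupp.degree_eq_sum, Fin.sum_univ_three] at hd
    rw [monomial_eq, Finsupp.prod_fintype _ _ (by simp), Fin.prod_univ_three]
    generalize coeff m F = t
    generalize m 0 = x at *
    generalize m 1 = y at *
    generalize m 2 = z at *
    have hx : x ≤ 2 := by omega
    have hy : y ≤ 2 := by omega
    obtain rfl : z = 2 - x - y := by omega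
    interval_cases x <;> interval_cases y <;> first
      | (exfalso; omega)
      | (refine ⟨t, 0, 0, 0, 0, 0, ?_⟩; simp; done)
      | (refine ⟨0, t, 0, 0, 0, 0, ?_⟩; simp; done)
      | (refine ⟨0, 0, t, 0, 0, 0, ?_⟩; simp; done)
      | (refine ⟨0, 0, 0, t, 0, 0, ?_⟩; simp; done)
      | (refine ⟨0, 0, 0, 0, t, 0, ?_⟩; simp; done)
      | (refine ⟨0, 0, 0, 0, 0, t, ?_⟩; simp; done)

/-- Every ternary cubic form is an explicit combination of the ten monomials. -/
lemma exists_cubic (F : MvPolynomial (Fin 3) ℚ) (hF : F.IsHomogeneous 3) :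
    ∃ a b c d e f g h k l : ℚ, F = C a * X 0 ^ 3 + C b * (X 0 ^ 2 * X 1) + C c * (X 0 ^ 2 * X 2)
      + C d * (X 0 * X 1 ^ 2) + C e * (X 0 * X 1 * X 2) + C f * (X 0 * X 2 ^ 2)
      + C g * X 1 ^ 3 + C h * (X 1 ^ 2 * X 2) + C k * (X 1 * X 2 ^ 2) + C l * X 2 ^ 3 := by
  rw [F.as_sum]
  refine Finset.sum_induction _ (fun G : MvPolynomial (Fin 3) ℚ =>
      ∃ a b c d e f g h k l : ℚ, G = C a * X 0 ^ 3 + C b * (X 0 ^ 2 * X 1) + C c * (X 0 ^ 2 * X 2)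
      + C d * (X 0 * X 1 ^ 2) + C e * (X 0 * X 1 * X 2) + C f * (X 0 * X 2 ^ 2)
      + C g * X 1 ^ 3 + C h * (X 1 ^ 2 * X 2) + C k * (X 1 * X 2 ^ 2) + C l * X 2 ^ 3) ?_ ?_ ?_
  · rintro _ _ ⟨a, b, c, d, e, f, g, h, k, l, rfl⟩ ⟨a', b', c', d', e', f', g', h', k', l', rfl⟩
    refine ⟨a + a', b + b', c + c', d + d', e + e', f + f', g + g', h + h', k + k', l + l', ?_⟩
    simp only [C_add]
    ring
  · exact ⟨0, 0, 0, 0, 0, 0, 0, 0, 0, 0, by simp⟩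
  · intro m hm
    have hd := hF (mem_support_iff.mp hm)
    change Finsupp.weight (fun _ => 1) m = _ at hd
    rw [← Finsupp.degree_eq_weight_one, Finsupp.degree_eq_sum, Fin.sum_univ_three] at hd
    rw [monomial_eq, Finsupp.prod_fintype _ _ (by simp), Fin.prod_univ_three]
    generalize coeff m F = t
    generalize m 0 = x at *
    generalize m 1 = y at *
    generalize m 2 = z at *
    have hx : x ≤ 3 := by omega
    have hy : y ≤ 3 := by omega
    obtain rfl : z = 3 - x - y := by omega
    interval_cases x <;> interval_cases y <;> first
      | (exfalso; omega)
      | (refine ⟨t, 0, 0, 0, 0, 0, 0, 0, 0, 0, ?_⟩; simp; done)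
      | (refine ⟨0, t, 0, 0, 0, 0, 0, 0, 0, 0, ?_⟩; simp; done)
      | (refine ⟨0, 0, t, 0, 0, 0, 0, 0, 0, 0, ?_⟩; simp; done)
      | (refine ⟨0, 0, 0, t, 0, 0, 0, 0, 0, 0, ?_⟩; simp; done)
      | (refine ⟨0, 0, 0, 0, t, 0, 0, 0, 0, 0, ?_⟩; simp; done)
      | (refine ⟨0, 0, 0, 0, 0, t, 0, 0, 0, 0, ?_⟩; simp; done)
      | (refine ⟨0, 0, 0, 0, 0, 0, t, 0, 0, 0, ?_⟩; simp; done)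
      | (refine ⟨0, 0, 0, 0, 0, 0, 0, t, 0, 0, ?_⟩; simp; done)
      | (refine ⟨0, 0, 0, 0, 0, 0, 0, 0, t, 0, ?_⟩; simp; done)
      | (refine ⟨0, 0, 0, 0, 0, 0, 0, 0, 0, t, ?_⟩; simp; done)

/-- A six-element subset of the eight indices misses exactly two of them. -/
lemma six_subset (s : Finset (Fin 8)) (hs : s.card = 6) :
    ∃ i j : Fin 8, i < j ∧ ∀ k, k ≠ i → k ≠ j → k ∈ s := by
  have hc : (sᶜ).card = 2 := by rw [Finset.card_compl, hs]; rfl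
  obtain ⟨i, j, hij, h⟩ := Finset.card_eq_two.mp hc
  have key : ∀ k, k ≠ i → k ≠ j → k ∈ s := by
    intro k hi hj
    by_contra hk
    have : k ∈ sᶜ := Finset.mem_compl.mpr hk
    rw [h] at this
    simp [hi, hj] at this
  rcases lt_or_gt_of_ne hij with h1 | h1
  · exact ⟨i, j, h1, key⟩
  · exact ⟨j, i, h1, fun k a b => key k b a⟩

/-- Collinearity, with integer coordinates so that it can be decided. -/
lemma collinear_int' : ∀ i j k : Fin 8, i ≠ j → i ≠ k → j ≠ k →
    let x : Fin 8 → ℤ := ![0, 3, 3, 8, 15, 24, 48, 0]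
    let y : Fin 8 → ℤ := ![-2, -9, 7, 26, 63, 124, 342, 0]
    (x j - x i) * (y k - y i) - (x k - x i) * (y j - y i) ≠ 0 := by
  decide +kernel

lemma points_cast (i : Fin 8) : examplePoints i =
    ![(((![0, 3, 3, 8, 15, 24, 48, 0] : Fin 8 → ℤ) i : ℤ) : ℚ),
      (((![-2, -9, 7, 26, 63, 124, 342, 0] : Fin 8 → ℤ) i : ℤ) : ℚ), 1] := by
  fin_cases i <;> simp [examplePoints]

lemma no_three : ∀ i j k : Fin 8, i ≠ j → i ≠ k → j ≠ k →
      (Matrix.of ![examplePoints i, examplePoints j, examplePoints k]).det ≠ 0 := by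
  intro i j k h1 h2 h3
  have h := collinear_int' i j k h1 h2 h3
  rw [points_cast i, points_cast j, points_cast k]
  dsimp only at h
  generalize (![0, 3, 3, 8, 15, 24, 48, 0] : Fin 8 → ℤ) = x at *
  generalize (![-2, -9, 7, 26, 63, 124, 342, 0] : Fin 8 → ℤ) = y at *
  rw [Matrix.det_fin_three]
  simp only [Matrix.of_apply, Matrix.cons_val]
  intro h0
  apply h
  have : (((x j - x i) * (y k - y i) - (x k - x i) * (y j - y i) : ℤ) : ℚ) = 0 := by
    push_cast
    linarith
  exact_mod_cast this

set_option maxHeartbeats 4000000 in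
lemma no_six (F : MvPolynomial (Fin 3) ℚ) (h0 : F ≠ 0) (hF : F.IsHomogeneous 2) :
      ¬∃ s : Finset (Fin 8), s.card = 6 ∧ ∀ i ∈ s, eval (examplePoints i) F = 0 := by
  rintro ⟨s, hs, hv⟩
  obtain ⟨i, j, hij, hk⟩ := six_subset s hs
  obtain ⟨a, b, c, d, e, f, rfl⟩ := exists_quadratic F hF
  have H : ∀ k, k ≠ i → k ≠ j → _ := fun k hi hj => hv k (hk k hi hj)
  clear hv hk hs hF
  suffices a = 0 ∧ b = 0 ∧ c = 0 ∧ d = 0 ∧ e = 0 ∧ f = 0 by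
    obtain ⟨rfl, rfl, rfl, rfl, rfl, rfl⟩ := this
    simp at h0
  clear h0
  have e0 := H 0
  have e1 := H 1
  have e2 := H 2
  have e3 := H 3
  have e4 := H 4
  have e5 := H 5
  have e6 := H 6
  have e7 := H 7
  clear H
  simp [examplePoints] at e0 e1 e2 e3 e4 e5 e6 e7
  fin_cases i <;> fin_cases j <;> first
    | (exfalso; revert hij; decide)
    | (simp at e0 e1 e2 e3 e4 e5 e6 e7
       refine ⟨?_, ?_, ?_, ?_, ?_, ?_⟩ <;> linarith)

set_option maxHeartbeats 4000000 in
lemma cubic_nonsing (F : MvPolynomial (Fin 3) ℚ) (h0 : F ≠ 0) (hF : F.IsHomogeneous 3)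
      (H : ∀ i : Fin 8, eval (examplePoints i) F = 0) :
      ∀ i : Fin 8, ∃ m : Fin 3, eval (examplePoints i) (pderiv m F) ≠ 0 := by
  intro i
  by_contra! hm
  obtain ⟨a, b, c, d, e, f, g, h, k, l, rfl⟩ := exists_cubic F hF
  clear hF
  suffices a = 0 ∧ b = 0 ∧ c = 0 ∧ d = 0 ∧ e = 0 ∧ f = 0 ∧ g = 0 ∧ h = 0 ∧ k = 0 ∧ l = 0 by
    obtain ⟨rfl, rfl, rfl, rfl, rfl, rfl, rfl, rfl, rfl, rfl⟩ := this
    simp at h0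
  clear h0
  have e0 := H 0
  have e1 := H 1
  have e2 := H 2
  have e3 := H 3
  have e4 := H 4
  have e5 := H 5
  have e6 := H 6
  have e7 := H 7
  clear H
  have d0 := hm 0
  have d1 := hm 1
  have d2 := hm 2
  clear hm
  simp [examplePoints] at e0 e1 e2 e3 e4 e5 e6 e7
  simp [pderiv_X] at d0 d1 d2
  fin_cases i <;> simp [examplePoints] at d0 d1 d2 <;>
    refine ⟨?_, ?_, ?_, ?_, ?_, ?_, ?_, ?_, ?_, ?_⟩ <;> linarith

/-- The eight points of Example 2.6 are in general position: no three are
collinear, no six lie on a conic, and every cubic through all eight points is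
nonsingular at each of them. -/
theorem examplePoints_in_general_position :
    (∀ i j k : Fin 8, i ≠ j → i ≠ k → j ≠ k →
      (Matrix.of ![examplePoints i, examplePoints j, examplePoints k]).det ≠ 0) ∧
    (∀ F : MvPolynomial (Fin 3) ℚ, F ≠ 0 → F.IsHomogeneous 2 →
      ¬∃ s : Finset (Fin 8), s.card = 6 ∧ ∀ i ∈ s, eval (examplePoints i) F = 0) ∧
    (∀ F : MvPolynomial (Fin 3) ℚ, F ≠ 0 → F.IsHomogeneous 3 →
      (∀ i : Fin 8, eval (examplePoints i) F = 0) →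
      ∀ i : Fin 8, ∃ m : Fin 3, eval (examplePoints i) (pderiv m F) ≠ 0) :=
  ⟨no_three, no_six, cubic_nonsing⟩
end

section
/- Let K = ℚ(ζ₃) where ζ₃ is a primitive third root of unity. The eight points of ℙ²(K) with homogeneous coordinates (0:1:0), (0:0:1), (1:1:1), (1:ζ₃:ζ₃²), (1:ζ₃²:ζ₃), (3:4:5), (3:4ζ₃:5ζ₃²), (3:4ζ₃²:5ζ₃) are in general position: (a) no three of them are collinear, i.e., for any three distinct points among them the 3×3 matrix of their coordinate vectors has nonzero determinant; (b) no six of them lie on a conic, i.e., there is no nonzero homogeneous polynomial of degree 2 in K[x,y,z] vanishing at six distinct points among them; (c) every nonzero homogeneous cubic polynomial F ∈ K[x,y,z] vanishing at all eight points is nonsingular at each of them, i.e., at each of the eight points at least one of the partial derivatives F_x, F_y, F_z does not vanish. -/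
open MvPolynomial

lemma homog_expand {K : Type*} [Field K] (n : ℕ) (F : MvPolynomial (Fin 3) K)
    (hF : F.IsHomogeneous n) :
    ∃ c : (Fin 3 → ℕ) → K, F = ∑ v ∈ Finset.Nat.antidiagonalTuple 3 n,
      C (c v) * X 0 ^ v 0 * X 1 ^ v 1 * X 2 ^ v 2 := by
  refine ⟨fun v => coeff (Finsupp.equivFunOnFinite.symm v) F, ?_⟩
  have hm : ∀ (v : Fin 3 → ℕ) (a : K), C a * X 0 ^ v 0 * X 1 ^ v 1 * X 2 ^ v 2
      = (monomial (Finsupp.equivFunOnFinite.symm v) a : MvPolynomial (Fin 3) K) := by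
    intro v a
    rw [monomial_eq, Finsupp.prod_fintype _ _ (by simp), Fin.prod_univ_three]
    simp [mul_assoc]
  simp only [hm]
  ext d
  rw [coeff_sum]
  simp only [coeff_monomial]
  by_cases hd : coeff d F = 0
  · rw [hd]
    symm
    apply Finset.sum_eq_zero
    intro v _
    split_ifs with h
    · rw [h, hd]
    · rfl
  · have h1 := hF hd
    rw [Finset.sum_eq_single (Finsupp.equivFunOnFinite d)]
    · simp
    · intro v _ hv
      rw [if_neg]
      rintro rfl
      simp at hv
    · intro h
      exfalso
      apply h
      rw [Finset.Nat.mem_antidiagonalTuple]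
      rw [← h1, Finsupp.weight_apply, Finsupp.sum_fintype _ _ (by simp)]
      simp

lemma quad_expand {K : Type*} [Field K] (F : MvPolynomial (Fin 3) K)
    (hF : F.IsHomogeneous 2) : ∃ a b c d e f : K,
    F = C a * X 0 ^ 2 + C b * X 1 ^ 2 + C c * X 2 ^ 2 + C d * (X 1 * X 2) + C e * (X 0 * X 2)
      + C f * (X 0 * X 1) := by
  obtain ⟨c, hc⟩ := homog_expand 2 F hF
  refine ⟨c ![2,0,0], c ![0,2,0], c ![0,0,2], c ![0,1,1], c ![1,0,1], c ![1,1,0], ?_⟩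
  have : Finset.Nat.antidiagonalTuple 3 2 =
    {![2,0,0], ![0,2,0], ![0,0,2], ![0,1,1], ![1,0,1], ![1,1,0]} := by decide
  rw [hc, this]
  repeat rw [Finset.sum_insert (by decide)]
  rw [Finset.sum_singleton]
  simp
  ring

lemma cubic_expand {K : Type*} [Field K] (F : MvPolynomial (Fin 3) K)
    (hF : F.IsHomogeneous 3) : ∃ a b c d e f g h i j : K,
    F = C a * X 0 ^ 3 + C b * X 1 ^ 3 + C c * X 2 ^ 3 + C d * (X 0 * X 1 * X 2)
      + C e * (X 0 ^ 2 * X 1) + C f * (X 1 ^ 2 * X 2) + C g * (X 2 ^ 2 * X 0)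
      + C h * (X 0 ^ 2 * X 2) + C i * (X 1 ^ 2 * X 0) + C j * (X 2 ^ 2 * X 1) := by
  obtain ⟨c, hc⟩ := homog_expand 3 F hF
  refine ⟨c ![3,0,0], c ![0,3,0], c ![0,0,3], c ![1,1,1], c ![2,1,0], c ![0,2,1], c ![1,0,2],
    c ![2,0,1], c ![1,2,0], c ![0,1,2], ?_⟩
  have : Finset.Nat.antidiagonalTuple 3 3 =
    {![3,0,0], ![0,3,0], ![0,0,3], ![1,1,1], ![2,1,0], ![0,2,1], ![1,0,2],
     ![2,0,1], ![1,2,0], ![0,1,2]} := by decide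
  rw [hc, this]
  repeat rw [Finset.sum_insert (by decide)]
  rw [Finset.sum_singleton]
  simp
  ring

lemma det_aux {K : Type*} [Field K] [CharZero K] (ζ : K) (h : ζ ^ 2 + ζ + 1 = 0)
    (Q : Fin 8 → Fin 3 → K)
    (hQ : Q = ![![0, 1, 0], ![0, 0, 1], ![1, 1, 1], ![1, ζ, ζ ^ 2],
      ![1, ζ ^ 2, ζ], ![3, 4, 5], ![3, 4 * ζ, 5 * ζ ^ 2], ![3, 4 * ζ ^ 2, 5 * ζ]]) :
    ∀ i j k : Fin 8, i < j → j < k →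
      (Matrix.of ![Q i, Q j, Q k]).det ≠ 0 := by
  intro i j k hij hjk
  rw [Matrix.det_fin_three]
  subst hQ
  have h2 : ζ ^ 2 = -ζ - 1 := by linear_combination h
  fin_cases i <;> fin_cases j <;> first | (exfalso; revert hij; decide) | skip
  all_goals fin_cases k <;> first | (exfalso; revert hjk; decide) | skip
  all_goals
    clear hij hjk
    simp [Matrix.of_apply]
    try grind

set_option maxHeartbeats 4000000 in
lemma conic_aux {K : Type*} [Field K] [CharZero K] (ζ : K) (hz : ζ ^ 2 + ζ + 1 = 0)
    (Q : Fin 8 → Fin 3 → K)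
    (hQ : Q = ![![0, 1, 0], ![0, 0, 1], ![1, 1, 1], ![1, ζ, ζ ^ 2],
      ![1, ζ ^ 2, ζ], ![3, 4, 5], ![3, 4 * ζ, 5 * ζ ^ 2], ![3, 4 * ζ ^ 2, 5 * ζ]])
    (a b c d e f : K) (i j : Fin 8) (hij : i < j)
    (H : ∀ k, k ≠ i → k ≠ j → a * Q k 0 ^ 2 + b * Q k 1 ^ 2 + c * Q k 2 ^ 2 + d * (Q k 1 * Q k 2)
      + e * (Q k 0 * Q k 2) + f * (Q k 0 * Q k 1) = 0) :
    a = 0 ∧ b = 0 ∧ c = 0 ∧ d = 0 ∧ e = 0 ∧ f = 0 := by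
  have h2 : ζ ^ 2 = -ζ - 1 := by linear_combination hz
  have h3 : ζ ^ 3 = 1 := by linear_combination (ζ - 1) * hz
  have h4 : ζ ^ 4 = ζ := by linear_combination (ζ - 1) * ζ * hz
  have H0 := H 0
  have H1 := H 1
  have H2 := H 2
  have H3 := H 3
  have H4 := H 4
  have H5 := H 5
  have H6 := H 6
  have H7 := H 7
  clear H
  subst hQ
  fin_cases i <;> fin_cases j <;> first | (exfalso; revert hij; decide) | skip
  all_goals
    clear hij
    simp at H0 H1 H2 H3 H4 H5 H6 H7
    grind

lemma cubic_aux {K : Type*} [Field K] [CharZero K] (ζ : K) (hz : ζ ^ 2 + ζ + 1 = 0)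
    (Q : Fin 8 → Fin 3 → K)
    (hQ : Q = ![![0, 1, 0], ![0, 0, 1], ![1, 1, 1], ![1, ζ, ζ ^ 2],
      ![1, ζ ^ 2, ζ], ![3, 4, 5], ![3, 4 * ζ, 5 * ζ ^ 2], ![3, 4 * ζ ^ 2, 5 * ζ]])
    (a b c d e f g h i j : K)
    (H : ∀ k, a * Q k 0 ^ 3 + b * Q k 1 ^ 3 + c * Q k 2 ^ 3 + d * (Q k 0 * Q k 1 * Q k 2)
      + e * (Q k 0 ^ 2 * Q k 1) + f * (Q k 1 ^ 2 * Q k 2) + g * (Q k 2 ^ 2 * Q k 0)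
      + h * (Q k 0 ^ 2 * Q k 2) + i * (Q k 1 ^ 2 * Q k 0) + j * (Q k 2 ^ 2 * Q k 1) = 0) :
    ∃ s t : K, a = 0 ∧ b = 0 ∧ c = 0 ∧ d = 0 ∧ e = -5 * s ∧ f = -39 * s ∧ g = 44 * s ∧
      h = 52 * t ∧ i = -55 * t ∧ j = 3 * t := by
  have h2 : ζ ^ 2 = -ζ - 1 := by linear_combination hz
  have H0 := H 0
  have H1 := H 1
  have H2 := H 2
  have H3 := H 3
  have H4 := H 4
  have H5 := H 5
  have H6 := H 6
  have H7 := H 7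
  clear H
  subst hQ
  simp at H0 H1 H2 H3 H4 H5 H6 H7
  refine ⟨g / 44, j / 3, ?_⟩
  grind

theorem mu3_points_in_general_position {K : Type*} [Field K] [Algebra ℚ K]
    [IsCyclotomicExtension {3} ℚ K]
    (ζ : K) (hζ : IsPrimitiveRoot ζ 3)
    (Q : Fin 8 → Fin 3 → K)
    (hQ : Q = ![![0, 1, 0], ![0, 0, 1], ![1, 1, 1], ![1, ζ, ζ ^ 2],
      ![1, ζ ^ 2, ζ], ![3, 4, 5], ![3, 4 * ζ, 5 * ζ ^ 2], ![3, 4 * ζ ^ 2, 5 * ζ]]) :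
    -- (a) no three of the points are collinear
    (∀ i j k : Fin 8, i ≠ j → i ≠ k → j ≠ k →
      (Matrix.of ![Q i, Q j, Q k]).det ≠ 0) ∧
    -- (b) no six of the points lie on a conic
    (∀ F : MvPolynomial (Fin 3) K, F ≠ 0 → F.IsHomogeneous 2 →
      ¬∃ s : Finset (Fin 8), s.card = 6 ∧ ∀ i ∈ s, eval (Q i) F = 0) ∧
    -- (c) every cubic through all eight points is nonsingular at each of them
    (∀ F : MvPolynomial (Fin 3) K, F ≠ 0 → F.IsHomogeneous 3 →
      (∀ i : Fin 8, eval (Q i) F = 0) →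
      ∀ i : Fin 8, ∃ m : Fin 3, eval (Q i) (pderiv m F) ≠ 0) := by
  have : CharZero K := algebraRat.charZero K
  have hz : ζ ^ 2 + ζ + 1 = 0 := by
    have h1 : ζ - 1 ≠ 0 := sub_ne_zero.2 (hζ.ne_one (by norm_num))
    have h3 := hζ.pow_eq_one
    apply mul_left_cancel₀ h1
    linear_combination h3
  refine ⟨?_, ?_, ?_⟩
  · have key := det_aux ζ hz Q hQ
    intro i j k hij hik hjk
    have e : ∀ u v w : Fin 3 → K, (Matrix.of ![u, v, w]).det =
      u 0 * v 1 * w 2 - u 0 * v 2 * w 1 - u 1 * v 0 * w 2 + u 1 * v 2 * w 0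
        + u 2 * v 0 * w 1 - u 2 * v 1 * w 0 := by
      intro u v w
      rw [Matrix.det_fin_three]
      simp
    simp only [e] at key ⊢
    intro h0
    rcases lt_or_gt_of_ne hij with h | h <;> rcases lt_or_gt_of_ne hik with h' | h' <;>
      rcases lt_or_gt_of_ne hjk with h'' | h''
    · exact key i j k h h'' (by linear_combination h0)
    · exact key i k j h' h'' (by linear_combination -h0)
    · exact absurd (h.trans h'') (not_lt.2 h'.le)
    · exact key k i j h' h (by linear_combination h0)
    · exact key j i k h h' (by linear_combination -h0)
    · exact absurd (h'.trans h'') (not_lt.2 h.le)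
    · exact key j k i h'' h' (by linear_combination h0)
    · exact key k j i h'' h (by linear_combination -h0)
  · rintro F hF0 hF ⟨s, hs, H⟩
    obtain ⟨a, b, c, d, e, f, rfl⟩ := quad_expand F hF
    have hc : sᶜ.card = 2 := by rw [Finset.card_compl, hs]; rfl
    obtain ⟨x, y, hxy, hc⟩ := Finset.card_eq_two.1 hc
    have hmem : ∀ k, k ≠ x → k ≠ y → k ∈ s := by
      intro k h1 h2
      by_contra h
      have : k ∈ sᶜ := Finset.mem_compl.2 h
      rw [hc] at this
      simp [h1, h2] at this
    have : a = 0 ∧ b = 0 ∧ c = 0 ∧ d = 0 ∧ e = 0 ∧ f = 0 := by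
      rcases lt_or_gt_of_ne hxy with h | h
      · refine conic_aux ζ hz Q hQ a b c d e f x y h fun k h1 h2 => ?_
        simpa using H k (hmem k h1 h2)
      · refine conic_aux ζ hz Q hQ a b c d e f y x h fun k h1 h2 => ?_
        simpa using H k (hmem k h2 h1)
    obtain ⟨rfl, rfl, rfl, rfl, rfl, rfl⟩ := this
    simp at hF0
  · intro F hF0 hF H p
    obtain ⟨a, b, c, d, e, f, g, h, i, j, rfl⟩ := cubic_expand F hF
    obtain ⟨s, t, rfl, rfl, rfl, rfl, rfl, rfl, rfl, rfl, rfl, rfl⟩ :=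
      cubic_aux ζ hz Q hQ a b c d e f g h i j (fun k => by simpa using H k)
    by_contra! hcon
    have e0 := hcon 0
    have e1 := hcon 1
    have e2 := hcon 2
    simp [pderiv_X, Derivation.leibniz, Derivation.leibniz_pow] at e0 e1 e2
    suffices s = 0 ∧ t = 0 by
      obtain ⟨rfl, rfl⟩ := this
      simp at hF0
    clear hcon H hF hF0
    have h2 : ζ ^ 2 = -ζ - 1 := by linear_combination hz
    subst hQ
    fin_cases p <;> simp at e0 e1 e2 <;> grind
end
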